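/- arXiv:0904.4655 — 3 statements merged into one kernel-verified Lean document; each statement's English description precedes it below -/
import Mathlib

section
/- Let M ≥ 1 be an integer, α a real with 0 < α < 1, t ≥ 0 a real, and let n ≥ M+1 be an integer. Then for all integers 1 ≤ j, k ≤ n, the sum ∑_{x∈ℤ} Φ^{n,t}_{n-j}(x)·Ψ^{n,t}_{n-k}(x) converges absolutely and equals δ_{j,k} (i.e. 1 if j = k and 0 otherwise). In particular it vanishes both when j ≥ M+1, k ≤ M and when j ≤ M, k ≥ M+1. -/
open Complex Real MeasureTheory

noncomputable section

/-- `Ψ^{n,t}_{n-j}(x)` for `n ≥ M+1`, combining the two cases `j ≤ M` and `j ≥ M+1`.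
The contour is the circle `|w| = 2` (the value is independent of the radius `R > 1`). -/
def Psi (M : ℕ) (α : ℝ) (n j : ℕ) (t : ℝ) (x : ℤ) : ℂ :=
  if j ≤ M then
    (2 * (π : ℂ) * I)⁻¹ * ∮ w in C((0 : ℂ), 2),
      w⁻¹ * (w * (w - 1)) ^ ((n : ℤ) - (M : ℤ)) *
        (w * (w - (α : ℂ))) ^ ((M : ℤ) - (j : ℤ)) * Complex.exp ((t : ℂ) * w) *
        w ^ (-(x + 2 * (n : ℤ) - 2 * (M : ℤ)))
  else
    (2 * (π : ℂ) * I)⁻¹ * ∮ w in C((0 : ℂ), 2),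
      w⁻¹ * (w * (w - 1)) ^ ((n : ℤ) - (j : ℤ)) * Complex.exp ((t : ℂ) * w) *
        w ^ (-(x + 2 * (n : ℤ) - 2 * (M : ℤ)))

/-- Integrand of the double contour integral defining `Φ^{n,t}_{n-j}(x)` for `1 ≤ j ≤ M`. -/
def phiLowInt (M : ℕ) (α : ℝ) (n j : ℕ) (t : ℝ) (x : ℤ) (v z : ℂ) : ℂ :=
  (1 + 2 * z) * (2 * v + 2 - (α : ℂ)) / ((z - v) * (z + v + 1)) *
    (1 + z) ^ (x + 2 * (n : ℤ) - 2 * (M : ℤ)) * Complex.exp (-((t : ℂ) * (z + 1))) *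
    (z * (1 + z)) ^ (-((n : ℤ) - (M : ℤ))) *
    ((v + 1) * (v + 1 - (α : ℂ))) ^ (-((M : ℤ) - (j : ℤ) + 1))

/-- `Φ^{n,t}_{n-j}(x)` for `n ≥ M+1`, combining the two cases.  For `j ≤ M` it is the double
contour integral where the `v`-contour is a circle of radius `rv` around `α-1` (enclosing
exactly `α-1`) and, for each `v`, the `z`-contour encloses exactly `0` and `v` (sum of two
circles of radius `rz`).  For `j ≥ M+1` it is a single integral over a circle of radius `rz`
around `0` (enclosing exactly `0`). -/
def Phi (M : ℕ) (α : ℝ) (n j : ℕ) (t : ℝ) (rv rz : ℝ) (x : ℤ) : ℂ :=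
  if j ≤ M then
    (2 * (π : ℂ) * I)⁻¹ * ∮ v in C((α : ℂ) - 1, rv),
      (2 * (π : ℂ) * I)⁻¹ *
        ((∮ z in C((0 : ℂ), rz), phiLowInt M α n j t x v z) +
         (∮ z in C(v, rz), phiLowInt M α n j t x v z))
  else
    (2 * (π : ℂ) * I)⁻¹ * ∮ v in C((0 : ℂ), rz),
      (1 + 2 * v) * (1 + v) ^ (x + 2 * (n : ℤ) - 2 * (M : ℤ)) *
        Complex.exp (-((t : ℂ) * (v + 1))) *
        (v * (1 + v)) ^ (-((n : ℤ) - (j : ℤ) + 1))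


namespace OrthAux

lemma hasSum_fam (f : ℕ → ℂ → ℂ) (S : ℂ → ℂ) (c : ℂ) (r : ℝ) (b : ℕ → ℝ)
    (hf : ∀ m, Continuous fun θ : ℝ => f m (circleMap c r θ))
    (hb : ∀ m, ∀ θ ∈ Set.uIoc 0 (2 * π), ‖f m (circleMap c r θ)‖ ≤ b m)
    (hs : Summable b)
    (hS : ∀ θ : ℝ, HasSum (fun m => f m (circleMap c r θ)) (S (circleMap c r θ))) :
    HasSum (fun m => ∮ z in C(c, r), f m z) (∮ z in C(c, r), S z) := by
  unfold circleIntegral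
  refine intervalIntegral.hasSum_integral_of_dominated_convergence
    (fun m _ => |r| * b m) ?_ ?_ ?_ ?_ ?_
  · intro m
    have : Continuous fun θ : ℝ => deriv (circleMap c r) θ • f m (circleMap c r θ) := by
      simp only [deriv_circleMap]
      exact ((continuous_circleMap 0 r).mul continuous_const).smul (hf m)
    exact this.aestronglyMeasurable
  · intro m
    refine Filter.Eventually.of_forall fun θ hθ => ?_
    rw [norm_smul]
    have : ‖deriv (circleMap c r) θ‖ = |r| := by simp [deriv_circleMap]
    rw [this]
    exact mul_le_mul_of_nonneg_left (hb m θ hθ) (abs_nonneg r)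
  · exact Filter.Eventually.of_forall fun θ _ => hs.mul_left _
  · exact intervalIntegrable_const
  · exact Filter.Eventually.of_forall fun θ _ => (hS θ).const_smul _

lemma summable_coef (a : ℕ → ℂ) (F : ℂ → ℂ)
    (ha : ∀ w : ℂ, ‖w‖ < 2 → HasSum (fun m => a m * w ^ m) (F w)) :
    Summable fun m => ‖a m‖ * (3 / 2 : ℝ) ^ m := by
  have h := (ha (3 / 2 : ℝ) (by
    rw [Complex.norm_real]; norm_num [abs_of_pos])).summable.norm
  refine h.congr fun m => ?_
  rw [norm_mul, norm_pow, Complex.norm_real, Real.norm_of_nonneg (by norm_num)]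

lemma hasSum_single (g : ℂ → ℂ) (c : ℂ) (r : ℝ)
    (hg : Continuous fun θ : ℝ => g (circleMap c r θ))
    (hB : ∀ θ : ℝ, ‖1 + circleMap c r θ‖ ≤ 3 / 2)
    (a : ℕ → ℂ) (F : ℂ → ℂ)
    (ha : ∀ w : ℂ, ‖w‖ < 2 → HasSum (fun m => a m * w ^ m) (F w)) :
    HasSum (fun m => a m * ∮ z in C(c, r), g z * (1 + z) ^ m)
      (∮ z in C(c, r), g z * F (1 + z)) := by
  simp only [← circleIntegral.integral_const_mul]
  obtain ⟨K, hK⟩ := (isCompact_uIcc (a := (0:ℝ)) (b := 2 * π)).exists_bound_of_continuousOn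
    hg.continuousOn
  refine hasSum_fam _ _ c r (fun m => K * (‖a m‖ * (3 / 2 : ℝ) ^ m)) ?_ ?_ ?_ ?_
  · intro m
    exact continuous_const.mul
      (hg.mul ((continuous_const.add (continuous_circleMap c r)).pow m))
  · intro m θ hθ
    have h1 := hK θ (Set.uIoc_subset_uIcc hθ)
    rw [norm_mul, norm_mul, norm_pow]
    calc ‖a m‖ * (‖g (circleMap c r θ)‖ * ‖1 + circleMap c r θ‖ ^ m)
        ≤ ‖a m‖ * (K * (3 / 2) ^ m) := by
          gcongr
          · exact (norm_nonneg _).trans h1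
          · exact hB θ
      _ = _ := by ring
  · exact (summable_coef a F ha).mul_left K
  · intro θ
    have := (ha (1 + circleMap c r θ) ((hB θ).trans_lt (by norm_num))).mul_left
      (g (circleMap c r θ))
    have e : (fun m => a m * (g (circleMap c r θ) * (1 + circleMap c r θ) ^ m)) =
        fun m => g (circleMap c r θ) * (a m * (1 + circleMap c r θ) ^ m) := by
      funext m; ring
    rw [e]
    exact this

lemma hasSum_double (g : ℂ → ℂ → ℂ) (c : ℂ) (r : ℝ) (cz : ℂ → ℂ) (rz : ℝ) (hrz : 0 ≤ rz)
    (hcz : Continuous cz)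
    (hg : Continuous fun p : ℝ × ℝ =>
      g (circleMap c r p.1) (circleMap (cz (circleMap c r p.1)) rz p.2))
    (hB : ∀ θ φ : ℝ, ‖1 + circleMap (cz (circleMap c r θ)) rz φ‖ ≤ 3 / 2)
    (a : ℕ → ℂ) (F : ℂ → ℂ)
    (ha : ∀ w : ℂ, ‖w‖ < 2 → HasSum (fun m => a m * w ^ m) (F w)) :
    HasSum (fun m => a m * ∮ v in C(c, r), ∮ z in C(cz v, rz), g v z * (1 + z) ^ m)
      (∮ v in C(c, r), ∮ z in C(cz v, rz), g v z * F (1 + z)) := by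
  simp only [← circleIntegral.integral_const_mul (a _) _ c r]
  obtain ⟨K, hK⟩ := ((isCompact_uIcc (a := (0:ℝ)) (b := 2 * π)).prod
    (isCompact_uIcc (a := (0:ℝ)) (b := 2 * π))).exists_bound_of_continuousOn
    hg.continuousOn
  refine hasSum_fam _ _ c r
    (fun m => (2 * π * rz) * (K * (‖a m‖ * (3 / 2 : ℝ) ^ m))) ?_ ?_ ?_ ?_
  · intro m
    refine continuous_const.mul ?_
    unfold circleIntegral
    refine intervalIntegral.continuous_parametric_intervalIntegral_of_continuous' ?_ _ _
    have h1 : Continuous fun p : ℝ × ℝ => circleMap (cz (circleMap c r p.1)) rz p.2 := by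
      have h2 := (continuous_circleMap c r)
      unfold circleMap at h2 ⊢
      fun_prop
    simp only [deriv_circleMap, smul_eq_mul, Function.uncurry_def]
    have h3 : Continuous fun p : ℝ × ℝ => circleMap 0 rz p.2 :=
      (continuous_circleMap 0 rz).comp continuous_snd
    exact (h3.mul continuous_const).mul (hg.mul ((continuous_const.add h1).pow m))
  · intro m θ hθ
    have h0 := Set.uIoc_subset_uIcc hθ
    rw [← circleIntegral.integral_const_mul]
    refine circleIntegral.norm_integral_le_of_norm_le_const hrz ?_
    intro z hz
    have hz' : z ∈ circleMap (cz (circleMap c r θ)) rz '' Set.Ioc 0 (2 * π) := by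
      rw [image_circleMap_Ioc, abs_of_nonneg hrz]; exact hz
    obtain ⟨φ, hφ, rfl⟩ := hz'
    have h2 : φ ∈ Set.uIcc 0 (2 * π) := by
      rw [Set.uIcc_of_le (by positivity)]; exact Set.Ioc_subset_Icc_self hφ
    have h1 := hK (θ, φ) ⟨h0, h2⟩
    simp only at h1
    rw [norm_mul, norm_mul, norm_pow]
    calc _ ≤ ‖a m‖ * (K * (3 / 2) ^ m) := by
          gcongr
          · exact (norm_nonneg _).trans h1
          · exact hB θ φ
      _ = _ := by ring
  · exact ((summable_coef a F ha).mul_left K).mul_left _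
  · intro θ
    refine hasSum_single (g (circleMap c r θ)) _ rz ?_ (hB θ) a F ha
    exact hg.comp (Continuous.prodMk continuous_const continuous_id)

/-- Taylor coefficients as contour integrals. -/
def cf (F : ℂ → ℂ) (y : ℤ) : ℂ :=
  (2 * (π : ℂ) * I)⁻¹ * ∮ w in C((0 : ℂ), 2), w⁻¹ * F w * w ^ (-y)

lemma cf_hasSum (F : ℂ → ℂ) (hF : Differentiable ℂ F) (w : ℂ) (hw : ‖w‖ < 2) :
    HasSum (fun m : ℕ => cf F m * w ^ m) (F w) := by
  have h := hasSum_cauchyPowerSeries_integral (f := F) (c := 0) (R := 2) (w := w)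
    (hF.continuous.continuousOn.circleIntegrable (by norm_num)) hw
  have h2 := hF.differentiableOn.circleIntegral_sub_inv_smul (c := 0) (R := 2) (w := w)
    (by simpa using hw)
  rw [zero_add, h2, smul_smul, inv_mul_cancel₀ Complex.two_pi_I_ne_zero, one_smul] at h
  have e : (fun m : ℕ => cf F m * w ^ m) = fun m => (cauchyPowerSeries F 0 2 m) fun _ => w := ?_
  · rw [e]; exact h
  funext m
  rw [cauchyPowerSeries_apply, cf, smul_eq_mul, mul_assoc]
  congr 1
  rw [mul_comm, ← circleIntegral.integral_const_mul]
  congr 1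
  ext z
  simp only [sub_zero, smul_eq_mul, zpow_neg, zpow_natCast, div_pow]
  ring

lemma cf_neg (F : ℂ → ℂ) (hF : Differentiable ℂ F) (y : ℤ) (hy : y < 0) : cf F y = 0 := by
  obtain ⟨p, rfl⟩ : ∃ p : ℕ, y = -((p : ℤ) + 1) := ⟨(-y - 1).toNat, by omega⟩
  rw [cf]
  have : (∮ w in C((0 : ℂ), 2), w⁻¹ * F w * w ^ (-(-((p : ℤ) + 1)))) =
      ∮ w in C((0 : ℂ), 2), F w * w ^ p := by
    refine circleIntegral.integral_congr (by norm_num) fun w hw => ?_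
    have hw0 : w ≠ 0 := by
      rintro rfl; simp at hw
    simp only [neg_neg]
    rw [zpow_add₀ hw0, zpow_natCast, zpow_one]
    field_simp
  rw [this]
  have hd : Differentiable ℂ fun w => F w * w ^ p := by fun_prop
  rw [DiffContOnCl.circleIntegral_eq_zero (by norm_num) hd.diffContOnCl, mul_zero]

lemma reduce (Φ : ℤ → ℂ) (F : ℂ → ℂ) (hF : Differentiable ℂ F) (d : ℤ) (S : ℂ)
    (h : HasSum (fun m : ℕ => cf F m * Φ ((m : ℤ) - d)) S) :
    HasSum (fun x : ℤ => Φ x * cf F (x + d)) S := by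
  have hi : Function.Injective (fun m : ℕ => (m : ℤ) - d) := by
    intro m m' hm
    simp only at hm
    omega
  rw [← hi.hasSum_iff]
  · convert h using 2 with m
    simp [mul_comm]
  · intro x hx
    rw [cf_neg F hF, mul_zero]
    by_contra hc
    exact hx ⟨(x + d).toNat, by simp only; omega⟩

end OrthAux

namespace OrthAux

lemma ev1 (c d : ℂ) (r : ℝ) (m : ℤ) (hr : 0 < r) (hd : r < ‖d - c‖) :
    (∮ v in C(c, r), (2 * v - c - d) * ((v - c) * (v - d)) ^ (m - 1)) =
      if m = 0 then 2 * (π : ℂ) * I else 0 := by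
  have hc0 : ∀ v ∈ Metric.sphere c r, v - c ≠ 0 := by
    intro v hv h
    rw [mem_sphere_iff_norm, h, norm_zero] at hv
    exact hr.ne hv
  have hd0 : ∀ v ∈ Metric.closedBall c r, v - d ≠ 0 := by
    intro v hv h
    rw [mem_closedBall_iff_norm, sub_eq_zero.1 h] at hv
    linarith
  split_ifs with hm
  · subst hm
    have : (∮ v in C(c, r), (2 * v - c - d) * ((v - c) * (v - d)) ^ ((0:ℤ) - 1)) =
        ∮ v in C(c, r), ((v - c)⁻¹ + (v - d)⁻¹) := by
      refine circleIntegral.integral_congr hr.le fun v hv => ?_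
      have h1 := hc0 v hv
      have h2 := hd0 v (Metric.sphere_subset_closedBall hv)
      simp only [zero_sub, zpow_neg, zpow_one]
      field_simp
      ring
    have hdiff : DifferentiableOn ℂ (fun v => (v - d)⁻¹) (Metric.closedBall c r) := by
      intro v hv
      exact ((differentiableAt_id.sub_const d).inv (hd0 v hv)).differentiableWithinAt
    rw [this, circleIntegral.integral_add, circleIntegral.integral_sub_center_inv c hr.ne',
      DiffContOnCl.circleIntegral_eq_zero hr.le
        (hdiff.mono Metric.closure_ball_subset_closedBall).diffContOnCl, add_zero]
    · refine ContinuousOn.circleIntegrable hr.le ?_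
      exact (continuousOn_id.sub continuousOn_const).inv₀ hc0
    · exact (hdiff.continuousOn.mono Metric.sphere_subset_closedBall).circleIntegrable hr.le
  · refine circleIntegral.integral_eq_zero_of_hasDerivWithinAt (f := fun v =>
      ((v - c) * (v - d)) ^ m / m) hr.le fun v hv => HasDerivAt.hasDerivWithinAt ?_
    have h1 := hc0 v hv
    have h2 := hd0 v (Metric.sphere_subset_closedBall hv)
    have hm' : (m : ℂ) ≠ 0 := by exact_mod_cast hm
    have h3 : HasDerivAt (fun v : ℂ => (v - c) * (v - d)) (1 * (v - d) + (v - c) * 1) v :=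
      ((hasDerivAt_id v).sub_const c).mul ((hasDerivAt_id v).sub_const d)
    have h4 := ((hasDerivAt_zpow m ((v - c) * (v - d)) (Or.inl (mul_ne_zero h1 h2))).comp v
      h3).div_const (m : ℂ)
    refine h4.congr_deriv ?_
    field_simp
    ring

lemma ev2 (v : ℂ) (r : ℝ) (hr : 0 < r) (hr1 : r < 1) (hv : r < ‖v‖) (hv1 : r < ‖v + 1‖) (m : ℕ) :
    (∮ z in C((0 : ℂ), r), (1 + 2 * z) / ((z - v) * (z + v + 1)) * (z * (1 + z)) ^ (-(m : ℤ))) =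
      if m = 0 then 0 else -(2 * (π : ℂ) * I) * (v * (1 + v)) ^ (-(m : ℤ)) := by
  have ha : ∀ z ∈ Metric.closedBall (0 : ℂ) r, z - v ≠ 0 := by
    intro z hz h
    rw [mem_closedBall_zero_iff, sub_eq_zero.1 h] at hz
    linarith
  have hb : ∀ z ∈ Metric.closedBall (0 : ℂ) r, z + v + 1 ≠ 0 := by
    intro z hz h
    have : z = -(v + 1) := by linear_combination h
    rw [mem_closedBall_zero_iff, this, norm_neg] at hz
    linarith
  have h1 : ∀ z ∈ Metric.closedBall (0 : ℂ) r, 1 + z ≠ 0 := by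
    intro z hz h
    have : z = -1 := by linear_combination h
    rw [mem_closedBall_zero_iff, this, norm_neg, norm_one] at hz
    linarith
  have h0 : ∀ z ∈ Metric.sphere (0 : ℂ) r, z ≠ 0 := by
    rintro z hz rfl
    rw [mem_sphere_zero_iff_norm, norm_zero] at hz
    exact hr.ne hz
  have hv0 : v ≠ 0 := by rintro rfl; simp at hv; linarith
  have hv10 : 1 + v ≠ 0 := by intro h; rw [add_comm, h, norm_zero] at hv1; linarith
  have hsb : ∀ z ∈ Metric.sphere (0 : ℂ) r, z ∈ Metric.closedBall (0 : ℂ) r :=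
    fun z hz => Metric.sphere_subset_closedBall hz
  induction m with
  | zero =>
    simp only [Nat.cast_zero, neg_zero, zpow_zero, mul_one, if_true]
    refine DiffContOnCl.circleIntegral_eq_zero hr.le
      (DifferentiableOn.diffContOnCl (DifferentiableOn.mono ?_
        Metric.closure_ball_subset_closedBall))
    intro z hz
    refine DifferentiableAt.differentiableWithinAt ?_
    exact DifferentiableAt.div (by fun_prop) (by fun_prop) (mul_ne_zero (ha z hz) (hb z hz))
  | succ m ih =>
    have e : (∮ z in C((0 : ℂ), r), (1 + 2 * z) / ((z - v) * (z + v + 1)) *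
          (z * (1 + z)) ^ (-((m + 1 : ℕ) : ℤ))) =
        ∮ z in C((0 : ℂ), r), (v * (1 + v))⁻¹ * ((1 + 2 * z) / ((z - v) * (z + v + 1)) *
          (z * (1 + z)) ^ (-(m : ℤ)) -
          (2 * z - 0 - (-1)) * ((z - 0) * (z - (-1))) ^ (-(m : ℤ) - 1)) := by
      refine circleIntegral.integral_congr hr.le fun z hz => ?_
      have ha' := ha z (hsb z hz)
      have hb' := hb z (hsb z hz)
      have h0' := h0 z hz
      have h1' := h1 z (hsb z hz)
      have hu : z * (1 + z) ≠ 0 := mul_ne_zero h0' h1'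
      have e1 : (z - 0) * (z - (-1)) = z * (1 + z) := by ring
      have e2 : (-((m + 1 : ℕ) : ℤ)) = -(m : ℤ) - 1 := by push_cast; ring
      rw [e1, e2, zpow_sub₀ hu, zpow_one]
      generalize (z * (1 + z)) ^ (-(m : ℤ)) = X
      field_simp
      ring
    rw [e, circleIntegral.integral_const_mul, circleIntegral.integral_sub, ih,
      ev1 0 (-1) r _ hr (by simpa using hr1)]
    · have e2 : (-((m + 1 : ℕ) : ℤ)) = -(m : ℤ) - 1 := by push_cast; ring
      rw [e2, zpow_sub₀ (mul_ne_zero hv0 hv10), zpow_one]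
      rcases Nat.eq_zero_or_pos m with rfl | hm
      · simp; ring
      · have : m ≠ 0 := hm.ne'
        have h3 : -(m : ℤ) ≠ 0 := by omega
        rw [if_neg this, if_neg h3, if_neg (Nat.succ_ne_zero m)]
        ring
    · refine ContinuousOn.circleIntegrable hr.le ?_
      intro z hz
      refine ContinuousAt.continuousWithinAt ?_
      refine ContinuousAt.mul (ContinuousAt.div (by fun_prop) (by fun_prop)
        (mul_ne_zero (ha z (hsb z hz)) (hb z (hsb z hz)))) ?_
      exact ContinuousAt.zpow₀ (by fun_prop) _
        (Or.inl (mul_ne_zero (h0 z hz) (h1 z (hsb z hz))))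
    · refine ContinuousOn.circleIntegrable hr.le ?_
      intro z hz
      refine ContinuousAt.continuousWithinAt ?_
      refine ContinuousAt.mul (by fun_prop) ?_
      refine ContinuousAt.zpow₀ (by fun_prop) _
        (Or.inl (mul_ne_zero (by simpa using h0 z hz) ?_))
      simpa [add_comm] using h1 z (hsb z hz)

lemma ev2' (v : ℂ) (r : ℝ) (hr : 0 < r) (hv : r < ‖v‖) (hv1 : r < ‖v + 1‖)
    (P : ℂ → ℂ) (hP : Differentiable ℂ P) :
    (∮ z in C((0 : ℂ), r), (1 + 2 * z) / ((z - v) * (z + v + 1)) * P z) = 0 := by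
  refine DiffContOnCl.circleIntegral_eq_zero hr.le
    (DifferentiableOn.diffContOnCl (DifferentiableOn.mono ?_
      Metric.closure_ball_subset_closedBall))
  intro z hz
  refine DifferentiableAt.differentiableWithinAt ?_
  refine DifferentiableAt.mul (DifferentiableAt.div (by fun_prop) (by fun_prop)
    (mul_ne_zero ?_ ?_)) (hP z)
  · intro h
    rw [mem_closedBall_zero_iff, sub_eq_zero.1 h] at hz
    linarith
  · intro h
    have : z = -(v + 1) := by linear_combination h
    rw [mem_closedBall_zero_iff, this, norm_neg] at hz
    linarith

lemma ev3 (v : ℂ) (r : ℝ) (hr : 0 < r) (hv : r < ‖2 * v + 1‖) (P : ℂ → ℂ)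
    (hP : ∀ z ∈ Metric.closedBall v r, DifferentiableAt ℂ P z) :
    (∮ z in C(v, r), (1 + 2 * z) / ((z - v) * (z + v + 1)) * P z) = 2 * (π : ℂ) * I * P v := by
  have h2 : 2 * v + 1 ≠ 0 := by intro h; rw [h, norm_zero] at hv; linarith
  have hd : DifferentiableOn ℂ (fun z => (1 + 2 * z) / (z + v + 1) * P z)
      (Metric.closedBall v r) := by
    intro z hz
    refine DifferentiableAt.differentiableWithinAt ?_
    refine DifferentiableAt.mul (DifferentiableAt.div (by fun_prop) (by fun_prop) ?_) (hP z hz)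
    intro h
    have : z - v = -(2 * v + 1) := by linear_combination h
    rw [mem_closedBall_iff_norm, this, norm_neg] at hz
    linarith
  have := hd.circleIntegral_sub_inv_smul (w := v) (by simpa using hr)
  simp only [smul_eq_mul] at this
  have e : (1 + 2 * v) / (v + v + 1) = 1 := by
    have e' : v + v + 1 = 2 * v + 1 := by ring
    rw [e', add_comm, div_self h2]
  rw [e, one_mul] at this
  rw [← this]
  congr 1
  ext z
  rw [div_mul_eq_div_div, div_eq_mul_inv (1 + 2 * z) (z - v)]
  ring

end OrthAux

namespace OrthAux

lemma hs_congr {f g : ℕ → ℂ} {S : ℂ} (e : ∀ m, f m = g m) (h : HasSum g S) : HasSum f S := by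
  rw [funext e]; exact h

/-- The entire function whose Taylor coefficients are `Psi`. -/
def Fk (M : ℕ) (α : ℝ) (n k : ℕ) (t : ℝ) (w : ℂ) : ℂ :=
  if k ≤ M then
    (w * (w - 1)) ^ (n - M) * (w * (w - (α : ℂ))) ^ (M - k) * Complex.exp ((t : ℂ) * w)
  else (w * (w - 1)) ^ (n - k) * Complex.exp ((t : ℂ) * w)

lemma Fk_diff (M : ℕ) (α : ℝ) (n k : ℕ) (t : ℝ) : Differentiable ℂ (Fk M α n k t) := by
  unfold Fk
  split_ifs <;> fun_prop

lemma Psi_eq (M : ℕ) (α : ℝ) (n k : ℕ) (t : ℝ) (hn : M + 1 ≤ n) (hkn : k ≤ n) (x : ℤ) :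
    Psi M α n k t x = cf (Fk M α n k t) (x + (2 * (n : ℤ) - 2 * (M : ℤ))) := by
  have e1 : (n : ℤ) - (M : ℤ) = ((n - M : ℕ) : ℤ) := by omega
  have e2 : (n : ℤ) - (k : ℤ) = ((n - k : ℕ) : ℤ) := by omega
  have e4 : x + 2 * (n : ℤ) - 2 * (M : ℤ) = x + (2 * (n : ℤ) - 2 * (M : ℤ)) := by ring
  unfold Psi cf Fk
  rw [e4, e1, e2]
  split_ifs with h
  · have e3 : (M : ℤ) - (k : ℤ) = ((M - k : ℕ) : ℤ) := by omega
    rw [e3]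
    simp only [zpow_natCast]
    congr 2
    ext w
    ring
  · simp only [zpow_natCast]
    congr 2
    ext w
    ring

/-- `z`-kernel for `j ≥ M+1`. -/
def gH (n j : ℕ) (t : ℝ) (v : ℂ) : ℂ :=
  (1 + 2 * v) * Complex.exp (-((t : ℂ) * (v + 1))) * (v * (1 + v)) ^ (-((n : ℤ) - (j : ℤ) + 1))

/-- kernel for `j ≤ M`. -/
def gL (M : ℕ) (α : ℝ) (n j : ℕ) (t : ℝ) (v z : ℂ) : ℂ :=
  (1 + 2 * z) * (2 * v + 2 - (α : ℂ)) / ((z - v) * (z + v + 1)) *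
    Complex.exp (-((t : ℂ) * (z + 1))) *
    (z * (1 + z)) ^ (-((n : ℤ) - (M : ℤ))) *
    ((v + 1) * (v + 1 - (α : ℂ))) ^ (-((M : ℤ) - (j : ℤ) + 1))

lemma sphere_facts (r : ℝ) (hr : 0 < r) (hr1 : r ≤ 1 / 4) (z : ℂ) (hz : ‖z‖ = r) :
    z ≠ 0 ∧ 1 + z ≠ 0 ∧ ‖1 + z‖ ≤ 3 / 2 := by
  refine ⟨?_, ?_, ?_⟩
  · rintro rfl; simp at hz; linarith
  · intro h
    have : z = -1 := by linear_combination h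
    rw [this, norm_neg, norm_one] at hz
    linarith
  · refine (norm_add_le _ _).trans ?_
    rw [norm_one]; linarith

lemma high_sum (M : ℕ) (α : ℝ) (n j k : ℕ) (t : ℝ) (hn : M + 1 ≤ n) (hkn : k ≤ n)
    (hj : ¬ j ≤ M) (rv rz : ℝ) (hrz : 0 < rz) (hrz1 : rz ≤ 1 / 4) :
    HasSum (fun x : ℤ => Phi M α n j t rv rz x * Psi M α n k t x)
      ((2 * (π : ℂ) * I)⁻¹ * ∮ v in C((0 : ℂ), rz), gH n j t v * Fk M α n k t (1 + v)) := by
  simp only [Psi_eq M α n k t hn hkn]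
  refine reduce _ _ (Fk_diff M α n k t) _ _ ?_
  have hs : ∀ θ : ℝ, ‖circleMap 0 rz θ‖ = rz := fun θ => by
    rw [norm_circleMap_zero, abs_of_pos hrz]
  have h := (hasSum_single (gH n j t) 0 rz ?_ ?_ _ _
    (cf_hasSum _ (Fk_diff M α n k t))).mul_left (2 * (π : ℂ) * I)⁻¹
  · refine hs_congr (fun m => ?_) h
    unfold Phi
    rw [if_neg hj, ← mul_assoc, ← mul_assoc, mul_comm (cf _ _)]
    congr 2
    ext v
    have e : ((m : ℤ) - (2 * (n : ℤ) - 2 * (M : ℤ))) + 2 * (n : ℤ) - 2 * (M : ℤ) = (m : ℤ) := by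
      ring
    rw [e, zpow_natCast, gH]
    ring
  · have hc := continuous_circleMap (0 : ℂ) rz
    unfold gH
    refine ((continuous_const.add (continuous_const.mul hc)).mul
      (Complex.continuous_exp.comp (by fun_prop))).mul
      ((hc.mul (continuous_const.add hc)).zpow₀ _ fun θ => Or.inl ?_)
    obtain ⟨h1, h2, -⟩ := sphere_facts rz hrz hrz1 _ (hs θ)
    exact mul_ne_zero h1 h2
  · exact fun θ => (sphere_facts rz hrz hrz1 _ (hs θ)).2.2

lemma cont_gL (M : ℕ) (α : ℝ) (n j : ℕ) (t : ℝ) (V Z : ℝ × ℝ → ℂ) (hV : Continuous V)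
    (hZ : Continuous Z) (h1 : ∀ p, Z p - V p ≠ 0) (h2 : ∀ p, Z p + V p + 1 ≠ 0)
    (h3 : ∀ p, Z p ≠ 0) (h4 : ∀ p, 1 + Z p ≠ 0) (h5 : ∀ p, V p + 1 ≠ 0)
    (h6 : ∀ p, V p + 1 - (α : ℂ) ≠ 0) : Continuous fun p => gL M α n j t (V p) (Z p) := by
  unfold gL
  refine Continuous.mul (Continuous.mul (Continuous.mul (Continuous.div (by fun_prop)
    (by fun_prop) fun p => mul_ne_zero (h1 p) (h2 p)) (by fun_prop)) ?_) ?_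
  · exact Continuous.zpow₀ (by fun_prop) _ fun p => Or.inl (mul_ne_zero (h3 p) (h4 p))
  · exact Continuous.zpow₀ (by fun_prop) _ fun p => Or.inl (mul_ne_zero (h5 p) (h6 p))

lemma cont_inner (g : ℂ → ℂ → ℂ) (c : ℂ) (r : ℝ) (cz : ℂ → ℂ) (rz : ℝ)
    (hcz : Continuous cz)
    (hg : Continuous fun p : ℝ × ℝ =>
      g (circleMap c r p.1) (circleMap (cz (circleMap c r p.1)) rz p.2)) (m : ℕ) :
    CircleIntegrable (fun v => ∮ z in C(cz v, rz), g v z * (1 + z) ^ m) c r := by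
  unfold CircleIntegrable
  refine Continuous.intervalIntegrable ?_ _ _
  unfold circleIntegral
  refine intervalIntegral.continuous_parametric_intervalIntegral_of_continuous' ?_ _ _
  have h1 : Continuous fun p : ℝ × ℝ => circleMap (cz (circleMap c r p.1)) rz p.2 := by
    have h2 := (continuous_circleMap c r)
    unfold circleMap at h2 ⊢
    fun_prop
  simp only [deriv_circleMap, smul_eq_mul, Function.uncurry_def]
  have h3 : Continuous fun p : ℝ × ℝ => circleMap 0 rz p.2 :=
    (continuous_circleMap 0 rz).comp continuous_snd
  exact (h3.mul continuous_const).mul (hg.mul ((continuous_const.add h1).pow m))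

/-- geometric facts about points of the `v`-circle -/
structure Good (α rz : ℝ) (v : ℂ) : Prop where
  a : rz < ‖v‖
  b : rz < ‖v + 1‖
  c : rz < ‖2 * v + 1‖
  d : v + 1 - (α : ℂ) ≠ 0
  e : ‖v + 1‖ + rz ≤ 3 / 2

lemma good_of (α rv rz ε : ℝ) (hα0 : 0 < α) (_hα1 : α < 1) (hrz : 0 < rz) (hr : rz < rv)
    (hrε : rv < ε) (h4 : ε ≤ 1 / 4) (h5 : ε ≤ α / 2) (h6 : ε ≤ (1 - α) / 2)
    (h7 : α = 1 / 2 ∨ 3 * ε ≤ |2 * α - 1|) (v : ℂ) (hv : ‖v - ((α : ℂ) - 1)‖ = rv) :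
    Good α rz v := by
  have n1 : ‖((1 - α : ℝ) : ℂ)‖ = 1 - α := by
    rw [Complex.norm_real, Real.norm_of_nonneg (by linarith)]
  have n2 : ‖((α : ℝ) : ℂ)‖ = α := by
    rw [Complex.norm_real, Real.norm_of_nonneg (by linarith)]
  set u := v - ((α : ℂ) - 1) with hu
  constructor
  · have : ((1 - α : ℝ) : ℂ) = u - v := by rw [hu]; push_cast; ring
    have h := norm_sub_le u v
    rw [← this, n1, hv] at h
    linarith
  · have : ((α : ℝ) : ℂ) = (v + 1) - u := by rw [hu]; ring
    have h := norm_sub_le (v + 1) u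
    rw [← this, n2, hv] at h
    linarith
  · rcases h7 with h7 | h7
    · have : 2 * v + 1 = 2 * u := by rw [hu, h7]; push_cast; ring
      rw [this, norm_mul, hv]
      norm_num
      linarith
    · have : ((2 * α - 1 : ℝ) : ℂ) = (2 * v + 1) - 2 * u := by rw [hu]; push_cast; ring
      have h := norm_sub_le (2 * v + 1) (2 * u)
      rw [← this, Complex.norm_real, Real.norm_eq_abs, norm_mul, hv] at h
      norm_num at h
      linarith
  · have : v + 1 - (α : ℂ) = u := by rw [hu]; ring
    rw [this]
    intro h
    rw [h, norm_zero] at hv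
    linarith
  · have : v + 1 = ((α : ℝ) : ℂ) + u := by rw [hu]; ring
    have h := norm_add_le ((α : ℝ) : ℂ) u
    rw [← this, n2, hv] at h
    linarith

lemma good_zero {α rz : ℝ} {v z : ℂ} (h : Good α rz v) (hz : ‖z‖ ≤ rz) :
    z - v ≠ 0 ∧ z + v + 1 ≠ 0 := by
  constructor
  · intro e
    rw [sub_eq_zero.1 e] at hz
    exact absurd h.a (not_lt.2 hz)
  · intro e
    have : z = -(v + 1) := by linear_combination e
    rw [this, norm_neg] at hz
    exact absurd h.b (not_lt.2 hz)

lemma good_v {α rz : ℝ} {v z : ℂ} (h : Good α rz v) (hz : ‖z - v‖ ≤ rz) :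
    z + v + 1 ≠ 0 ∧ z ≠ 0 ∧ 1 + z ≠ 0 ∧ ‖1 + z‖ ≤ 3 / 2 := by
  refine ⟨?_, ?_, ?_, ?_⟩
  · intro e
    have : z - v = -(2 * v + 1) := by linear_combination e
    rw [this, norm_neg] at hz
    exact absurd h.c (not_lt.2 hz)
  · rintro rfl
    rw [zero_sub, norm_neg] at hz
    exact absurd h.a (not_lt.2 hz)
  · intro e
    have : z - v = -(v + 1) := by linear_combination e
    rw [this, norm_neg] at hz
    exact absurd h.b (not_lt.2 hz)
  · have : 1 + z = (v + 1) + (z - v) := by ring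
    rw [this]
    have := h.e
    have := norm_add_le (v + 1) (z - v)
    linarith

lemma low_sum (M : ℕ) (α : ℝ) (n j k : ℕ) (t : ℝ) (hn : M + 1 ≤ n) (hkn : k ≤ n)
    (hj : j ≤ M) (rv rz : ℝ) (hrz : 0 < rz) (hrz1 : rz ≤ 1 / 4) (hrv : 0 < rv)
    (hG : ∀ v ∈ Metric.sphere ((α : ℂ) - 1) rv, Good α rz v) :
    HasSum (fun x : ℤ => Phi M α n j t rv rz x * Psi M α n k t x)
      ((2 * (π : ℂ) * I)⁻¹ * ((2 * (π : ℂ) * I)⁻¹ *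
        ((∮ v in C((α : ℂ) - 1, rv), ∮ z in C((0 : ℂ), rz),
          gL M α n j t v z * Fk M α n k t (1 + z)) +
        (∮ v in C((α : ℂ) - 1, rv), ∮ z in C(v, rz),
          gL M α n j t v z * Fk M α n k t (1 + z))))) := by
  simp only [Psi_eq M α n k t hn hkn]
  refine reduce _ _ (Fk_diff M α n k t) _ _ ?_
  have hs : ∀ θ : ℝ, ‖circleMap 0 rz θ‖ = rz := fun θ => by
    rw [norm_circleMap_zero, abs_of_pos hrz]
  have hs' : ∀ (v : ℂ) (θ : ℝ), ‖circleMap v rz θ - v‖ = rz := fun v θ => by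
    rw [circleMap_sub_center, hs]
  have hg : ∀ θ : ℝ, Good α rz (circleMap ((α : ℂ) - 1) rv θ) := fun θ =>
    hG _ (circleMap_mem_sphere _ hrv.le θ)
  have hb : ∀ θ : ℝ, circleMap ((α : ℂ) - 1) rv θ + 1 ≠ 0 := fun θ e => by
    have := (hg θ).b
    rw [e, norm_zero] at this
    linarith
  have hcv : Continuous fun p : ℝ × ℝ => circleMap ((α : ℂ) - 1) rv p.1 :=
    (continuous_circleMap _ rv).comp continuous_fst
  have c0 : Continuous fun p : ℝ × ℝ => gL M α n j t (circleMap ((α : ℂ) - 1) rv p.1)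
      (circleMap ((fun _ => (0 : ℂ)) (circleMap ((α : ℂ) - 1) rv p.1)) rz p.2) := by
    refine cont_gL M α n j t _ _ hcv ((continuous_circleMap _ rz).comp continuous_snd)
      (fun p => (good_zero (hg p.1) (hs p.2).le).1) (fun p => (good_zero (hg p.1) (hs p.2).le).2)
      (fun p => (sphere_facts rz hrz hrz1 _ (hs p.2)).1)
      (fun p => (sphere_facts rz hrz hrz1 _ (hs p.2)).2.1)
      (fun p => hb p.1) (fun p => (hg p.1).d)
  have c1 : Continuous fun p : ℝ × ℝ => gL M α n j t (circleMap ((α : ℂ) - 1) rv p.1)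
      (circleMap ((fun v => v) (circleMap ((α : ℂ) - 1) rv p.1)) rz p.2) := by
    refine cont_gL M α n j t _ _ hcv ?_
      (fun p => ?_) (fun p => (good_v (hg p.1) (hs' _ p.2).le).1)
      (fun p => (good_v (hg p.1) (hs' _ p.2).le).2.1)
      (fun p => (good_v (hg p.1) (hs' _ p.2).le).2.2.1)
      (fun p => hb p.1) (fun p => (hg p.1).d)
    · unfold circleMap
      fun_prop
    · intro e
      have := hs' (circleMap ((α : ℂ) - 1) rv p.1) p.2
      rw [e, norm_zero] at this
      linarith
  have s0 := hasSum_double (gL M α n j t) ((α : ℂ) - 1) rv (fun _ => 0) rz hrz.le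
    continuous_const c0 (fun θ φ => (sphere_facts rz hrz hrz1 _ (hs φ)).2.2) _ _
    (cf_hasSum _ (Fk_diff M α n k t))
  have s1 := hasSum_double (gL M α n j t) ((α : ℂ) - 1) rv (fun v => v) rz hrz.le
    continuous_id c1 (fun θ φ => (good_v (hg θ) (hs' _ φ).le).2.2.2) _ _
    (cf_hasSum _ (Fk_diff M α n k t))
  have h := ((s0.add s1).mul_left (2 * (π : ℂ) * I)⁻¹).mul_left (2 * (π : ℂ) * I)⁻¹
  refine hs_congr (fun m => ?_) h
  have i0 := cont_inner (gL M α n j t) ((α : ℂ) - 1) rv (fun _ => 0) rz continuous_const c0 m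
  have i1 := cont_inner (gL M α n j t) ((α : ℂ) - 1) rv (fun v => v) rz continuous_id c1 m
  rw [← mul_add, ← circleIntegral.integral_add i0 i1]
  unfold Phi
  rw [if_pos hj, circleIntegral.integral_const_mul]
  have e : ((m : ℤ) - (2 * (n : ℤ) - 2 * (M : ℤ))) + 2 * (n : ℤ) - 2 * (M : ℤ) = (m : ℤ) := by
    ring
  have e2 : ∀ v z : ℂ, phiLowInt M α n j t ((m : ℤ) - (2 * (n : ℤ) - 2 * (M : ℤ))) v z =
      gL M α n j t v z * (1 + z) ^ m := by
    intro v z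
    rw [phiLowInt, gL, e, zpow_natCast]
    ring
  simp only [e2]
  ring

end OrthAux

namespace OrthAux

lemma exp_cancel (t : ℝ) (z : ℂ) :
    Complex.exp (-((t : ℂ) * (z + 1))) * Complex.exp ((t : ℂ) * (1 + z)) = 1 := by
  rw [← Complex.exp_add]
  have : -((t : ℂ) * (z + 1)) + (t : ℂ) * (1 + z) = 0 := by ring
  rw [this, Complex.exp_zero]

lemma hh_eval (M : ℕ) (α : ℝ) (n j k : ℕ) (t : ℝ) (hkn : k ≤ n) (hk : ¬ k ≤ M)
    (rz : ℝ) (hrz : 0 < rz) (hrz1 : rz ≤ 1 / 4) :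
    (2 * (π : ℂ) * I)⁻¹ * (∮ v in C((0 : ℂ), rz), gH n j t v * Fk M α n k t (1 + v)) =
      if j = k then 1 else 0 := by
  have e : (∮ v in C((0 : ℂ), rz), gH n j t v * Fk M α n k t (1 + v)) =
      ∮ v in C((0 : ℂ), rz), (2 * v - 0 - (-1)) *
        ((v - 0) * (v - (-1))) ^ (((j : ℤ) - (k : ℤ)) - 1) := by
    refine circleIntegral.integral_congr hrz.le fun v hv => ?_
    obtain ⟨h1, h2, -⟩ := sphere_facts rz hrz hrz1 v (by simpa using hv)
    have hu : v * (1 + v) ≠ 0 := mul_ne_zero h1 h2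
    have e1 : (v - 0) * (v - (-1)) = v * (1 + v) := by ring
    have e2 : (1 + v) * (1 + v - 1) = v * (1 + v) := by ring
    have e3 : (j : ℤ) - (k : ℤ) - 1 = -((n : ℤ) - (j : ℤ) + 1) + ((n - k : ℕ) : ℤ) := by omega
    simp only [gH, Fk, if_neg hk]
    rw [e1, e2, e3, zpow_add₀ hu, zpow_natCast]
    linear_combination (1 + 2 * v) * (v * (1 + v)) ^ (-((n : ℤ) - (j : ℤ) + 1)) *
      (v * (1 + v)) ^ (n - k) * exp_cancel t v
  rw [e, ev1 0 (-1) rz _ hrz (by simp; linarith)]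
  by_cases h : j = k
  · rw [if_pos (by omega), if_pos h, inv_mul_cancel₀ Complex.two_pi_I_ne_zero]
  · rw [if_neg (by omega), if_neg h, mul_zero]

lemma hl_eval (M : ℕ) (α : ℝ) (n j k : ℕ) (t : ℝ) (hn : M + 1 ≤ n) (hjn : j ≤ n)
    (hj : ¬ j ≤ M) (hk : k ≤ M)
    (rz : ℝ) (hrz : 0 < rz) (hrz1 : rz ≤ 1 / 4) :
    (2 * (π : ℂ) * I)⁻¹ * (∮ v in C((0 : ℂ), rz), gH n j t v * Fk M α n k t (1 + v)) = 0 := by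
  have e : (∮ v in C((0 : ℂ), rz), gH n j t v * Fk M α n k t (1 + v)) =
      ∮ v in C((0 : ℂ), rz), (1 + 2 * v) * (v * (1 + v)) ^ (j - M - 1) *
        ((1 + v) * (1 + v - (α : ℂ))) ^ (M - k) := by
    refine circleIntegral.integral_congr hrz.le fun v hv => ?_
    obtain ⟨h1, h2, -⟩ := sphere_facts rz hrz hrz1 v (by simpa using hv)
    have hu : v * (1 + v) ≠ 0 := mul_ne_zero h1 h2
    have e2 : (1 + v) * (1 + v - 1) = v * (1 + v) := by ring
    have e3 : ((j - M - 1 : ℕ) : ℤ) = -((n : ℤ) - (j : ℤ) + 1) + ((n - M : ℕ) : ℤ) := by omega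
    simp only [gH, Fk, if_pos hk]
    rw [e2, ← zpow_natCast (v * (1 + v)) (j - M - 1), e3, zpow_add₀ hu, zpow_natCast]
    linear_combination (1 + 2 * v) * (v * (1 + v)) ^ (-((n : ℤ) - (j : ℤ) + 1)) *
      (v * (1 + v)) ^ (n - M) * ((1 + v) * (1 + v - (α : ℂ))) ^ (M - k) * exp_cancel t v
  have hd : Differentiable ℂ fun v : ℂ => (1 + 2 * v) * (v * (1 + v)) ^ (j - M - 1) *
        ((1 + v) * (1 + v - (α : ℂ))) ^ (M - k) := by fun_prop
  rw [e, DiffContOnCl.circleIntegral_eq_zero hrz.le hd.diffContOnCl, mul_zero]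

lemma lh_int (M : ℕ) (α : ℝ) (n j k : ℕ) (t : ℝ) (hn : M + 1 ≤ n) (hkn : k ≤ n)
    (hk : ¬ k ≤ M) (v z : ℂ) (hu : z * (1 + z) ≠ 0) :
    gL M α n j t v z * Fk M α n k t (1 + z) =
      ((2 * v + 2 - (α : ℂ)) * ((v + 1) * (v + 1 - (α : ℂ))) ^ (-((M : ℤ) - (j : ℤ) + 1))) *
      ((1 + 2 * z) / ((z - v) * (z + v + 1)) * (z * (1 + z)) ^ (-((k - M : ℕ) : ℤ))) := by
  have e2 : (1 + z) * (1 + z - 1) = z * (1 + z) := by ring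
  have e3 : -((k - M : ℕ) : ℤ) = -((n : ℤ) - (M : ℤ)) + ((n - k : ℕ) : ℤ) := by omega
  simp only [gL, Fk, if_neg hk]
  rw [e2, e3, zpow_add₀ hu, zpow_natCast]
  generalize ((v + 1) * (v + 1 - (α : ℂ))) ^ (-((M : ℤ) - (j : ℤ) + 1)) = X
  generalize (z * (1 + z)) ^ (-((n : ℤ) - (M : ℤ))) = Y
  linear_combination (1 + 2 * z) * (2 * v + 2 - (α : ℂ)) / ((z - v) * (z + v + 1)) * X * Y *
      (z * (1 + z)) ^ (n - k) * exp_cancel t z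

lemma ll_int (M : ℕ) (α : ℝ) (n j k : ℕ) (t : ℝ) (hn : M + 1 ≤ n)
    (hk : k ≤ M) (v z : ℂ) (hu : z * (1 + z) ≠ 0) :
    gL M α n j t v z * Fk M α n k t (1 + z) =
      ((2 * v + 2 - (α : ℂ)) * ((v + 1) * (v + 1 - (α : ℂ))) ^ (-((M : ℤ) - (j : ℤ) + 1))) *
      ((1 + 2 * z) / ((z - v) * (z + v + 1)) * ((z + 1) * (z + 1 - (α : ℂ))) ^ (M - k)) := by
  have e2 : (1 + z) * (1 + z - 1) = z * (1 + z) := by ring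
  have e4 : (1 + z) * (1 + z - (α : ℂ)) = (z + 1) * (z + 1 - (α : ℂ)) := by ring
  have e3 : (z * (1 + z)) ^ (-((n : ℤ) - (M : ℤ))) * (z * (1 + z)) ^ (n - M) = 1 := by
    rw [← zpow_natCast, ← zpow_add₀ hu]
    have : -((n : ℤ) - (M : ℤ)) + ((n - M : ℕ) : ℤ) = 0 := by omega
    rw [this, zpow_zero]
  simp only [gL, Fk, if_pos hk]
  rw [e2, e4]
  generalize ((v + 1) * (v + 1 - (α : ℂ))) ^ (-((M : ℤ) - (j : ℤ) + 1)) = X at *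
  generalize (z * (1 + z)) ^ (-((n : ℤ) - (M : ℤ))) = Y at *
  generalize (z * (1 + z)) ^ (n - M) = Z at *
  generalize ((z + 1) * (z + 1 - (α : ℂ))) ^ (M - k) = W at *
  have h := exp_cancel t z
  linear_combination (1 + 2 * z) * (2 * v + 2 - (α : ℂ)) / ((z - v) * (z + v + 1)) * X * W *
    (Y * Z * h + e3)

lemma lh_eval (M : ℕ) (α : ℝ) (n j k : ℕ) (t : ℝ) (hn : M + 1 ≤ n) (hkn : k ≤ n)
    (hk : ¬ k ≤ M) (rv rz : ℝ) (hrz : 0 < rz) (hrz1 : rz ≤ 1 / 4) (hrv : 0 < rv)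
    (hG : ∀ v ∈ Metric.sphere ((α : ℂ) - 1) rv, Good α rz v) :
    ((∮ v in C((α : ℂ) - 1, rv), ∮ z in C((0 : ℂ), rz),
          gL M α n j t v z * Fk M α n k t (1 + z)) +
        (∮ v in C((α : ℂ) - 1, rv), ∮ z in C(v, rz),
          gL M α n j t v z * Fk M α n k t (1 + z))) = 0 := by
  have e : (∮ v in C((α : ℂ) - 1, rv), ∮ z in C((0 : ℂ), rz),
          gL M α n j t v z * Fk M α n k t (1 + z)) =
      ∮ v in C((α : ℂ) - 1, rv), (-1) * ∮ z in C(v, rz),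
          gL M α n j t v z * Fk M α n k t (1 + z) := by
    refine circleIntegral.integral_congr hrv.le fun v hv => ?_
    have hg := hG v hv
    have i0 : (∮ z in C((0 : ℂ), rz), gL M α n j t v z * Fk M α n k t (1 + z)) =
        ∮ z in C((0 : ℂ), rz), ((2 * v + 2 - (α : ℂ)) *
          ((v + 1) * (v + 1 - (α : ℂ))) ^ (-((M : ℤ) - (j : ℤ) + 1))) *
          ((1 + 2 * z) / ((z - v) * (z + v + 1)) * (z * (1 + z)) ^ (-((k - M : ℕ) : ℤ))) := by
      refine circleIntegral.integral_congr hrz.le fun z hz => ?_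
      obtain ⟨h1, h2, -⟩ := sphere_facts rz hrz hrz1 z (by simpa using hz)
      exact lh_int M α n j k t hn hkn hk v z (mul_ne_zero h1 h2)
    have i1 : (∮ z in C(v, rz), gL M α n j t v z * Fk M α n k t (1 + z)) =
        ∮ z in C(v, rz), ((2 * v + 2 - (α : ℂ)) *
          ((v + 1) * (v + 1 - (α : ℂ))) ^ (-((M : ℤ) - (j : ℤ) + 1))) *
          ((1 + 2 * z) / ((z - v) * (z + v + 1)) * (z * (1 + z)) ^ (-((k - M : ℕ) : ℤ))) := by
      refine circleIntegral.integral_congr hrz.le fun z hz => ?_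
      obtain ⟨-, h1, h2, -⟩ := good_v hg (mem_sphere_iff_norm.1 hz).le
      exact lh_int M α n j k t hn hkn hk v z (mul_ne_zero h1 h2)
    rw [i0, i1, circleIntegral.integral_const_mul, circleIntegral.integral_const_mul,
      ev2 v rz hrz (by linarith) hg.a hg.b, if_neg (by omega),
      ev3 v rz hrz hg.c (fun z => (z * (1 + z)) ^ (-((k - M : ℕ) : ℤ)))]
    · ring
    · intro z hz
      obtain ⟨-, h1, h2, -⟩ := good_v hg (mem_closedBall_iff_norm.1 hz)
      exact DifferentiableAt.zpow (by fun_prop) (Or.inl (mul_ne_zero h1 h2))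
  rw [e, circleIntegral.integral_const_mul]
  ring

lemma ll_eval (M : ℕ) (α : ℝ) (n j k : ℕ) (t : ℝ) (hn : M + 1 ≤ n)
    (hk : k ≤ M) (rv rz : ℝ) (hrz : 0 < rz) (hrz1 : rz ≤ 1 / 4) (hrv : 0 < rv)
    (hα : rv < α)
    (hG : ∀ v ∈ Metric.sphere ((α : ℂ) - 1) rv, Good α rz v) :
    (2 * (π : ℂ) * I)⁻¹ * ((2 * (π : ℂ) * I)⁻¹ * ((∮ v in C((α : ℂ) - 1, rv), ∮ z in C((0 : ℂ), rz),
          gL M α n j t v z * Fk M α n k t (1 + z)) +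
        (∮ v in C((α : ℂ) - 1, rv), ∮ z in C(v, rz),
          gL M α n j t v z * Fk M α n k t (1 + z)))) = if j = k then 1 else 0 := by
  have e0 : (∮ v in C((α : ℂ) - 1, rv), ∮ z in C((0 : ℂ), rz),
          gL M α n j t v z * Fk M α n k t (1 + z)) =
      ∮ v in C((α : ℂ) - 1, rv), (0 : ℂ) * 0 := by
    refine circleIntegral.integral_congr hrv.le fun v hv => ?_
    have hg := hG v hv
    have i0 : (∮ z in C((0 : ℂ), rz), gL M α n j t v z * Fk M α n k t (1 + z)) =
        ∮ z in C((0 : ℂ), rz), ((2 * v + 2 - (α : ℂ)) *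
          ((v + 1) * (v + 1 - (α : ℂ))) ^ (-((M : ℤ) - (j : ℤ) + 1))) *
          ((1 + 2 * z) / ((z - v) * (z + v + 1)) * ((z + 1) * (z + 1 - (α : ℂ))) ^ (M - k)) := by
      refine circleIntegral.integral_congr hrz.le fun z hz => ?_
      obtain ⟨h1, h2, -⟩ := sphere_facts rz hrz hrz1 z (by simpa using hz)
      exact ll_int M α n j k t hn hk v z (mul_ne_zero h1 h2)
    rw [i0, circleIntegral.integral_const_mul,
      ev2' v rz hrz hg.a hg.b (fun z => ((z + 1) * (z + 1 - (α : ℂ))) ^ (M - k)) (by fun_prop)]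
    ring
  have e1 : (∮ v in C((α : ℂ) - 1, rv), ∮ z in C(v, rz),
          gL M α n j t v z * Fk M α n k t (1 + z)) =
      ∮ v in C((α : ℂ) - 1, rv), (2 * (π : ℂ) * I) * ((2 * v - ((α : ℂ) - 1) - (-1)) *
        ((v - ((α : ℂ) - 1)) * (v - (-1))) ^ (((j : ℤ) - (k : ℤ)) - 1)) := by
    refine circleIntegral.integral_congr hrv.le fun v hv => ?_
    have hg := hG v hv
    have i1 : (∮ z in C(v, rz), gL M α n j t v z * Fk M α n k t (1 + z)) =
        ∮ z in C(v, rz), ((2 * v + 2 - (α : ℂ)) *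
          ((v + 1) * (v + 1 - (α : ℂ))) ^ (-((M : ℤ) - (j : ℤ) + 1))) *
          ((1 + 2 * z) / ((z - v) * (z + v + 1)) * ((z + 1) * (z + 1 - (α : ℂ))) ^ (M - k)) := by
      refine circleIntegral.integral_congr hrz.le fun z hz => ?_
      obtain ⟨-, h1, h2, -⟩ := good_v hg (mem_sphere_iff_norm.1 hz).le
      exact ll_int M α n j k t hn hk v z (mul_ne_zero h1 h2)
    have hv1 : v + 1 ≠ 0 := by
      intro h
      have := hg.b
      rw [h, norm_zero] at this
      linarith
    have hu : (v + 1) * (v + 1 - (α : ℂ)) ≠ 0 := mul_ne_zero hv1 hg.d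
    have e4 : (v - ((α : ℂ) - 1)) * (v - (-1)) = (v + 1) * (v + 1 - (α : ℂ)) := by ring
    have e3 : (j : ℤ) - (k : ℤ) - 1 = -((M : ℤ) - (j : ℤ) + 1) + ((M - k : ℕ) : ℤ) := by omega
    rw [i1, circleIntegral.integral_const_mul,
      ev3 v rz hrz hg.c (fun z => ((z + 1) * (z + 1 - (α : ℂ))) ^ (M - k))
      (fun z _ => by fun_prop), e4, e3, zpow_add₀ hu, zpow_natCast]
    ring
  rw [e0, e1, circleIntegral.integral_const_mul, circleIntegral.integral_const_mul,
    ev1 ((α : ℂ) - 1) (-1) rv _ hrv ?_, zero_mul, zero_add,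
    inv_mul_cancel_left₀ Complex.two_pi_I_ne_zero]
  · by_cases h : j = k
    · rw [if_pos (by omega), if_pos h, inv_mul_cancel₀ Complex.two_pi_I_ne_zero]
    · rw [if_neg (by omega), if_neg h, mul_zero]
  · have : (-1 : ℂ) - ((α : ℂ) - 1) = -(α : ℂ) := by ring
    rw [this, norm_neg, Complex.norm_real, Real.norm_of_nonneg (by linarith)]
    exact hα

lemma main_hasSum (M : ℕ) (α : ℝ) (hα0 : 0 < α) (hα1 : α < 1)
    (t : ℝ) (n : ℕ) (hn : M + 1 ≤ n) (j k : ℕ) (hjn : j ≤ n) (hkn : k ≤ n) :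
    ∃ ε > 0, ∀ rv rz : ℝ, 0 < rz → rz < rv → rv < ε →
      HasSum (fun x : ℤ => Phi M α n j t rv rz x * Psi M α n k t x)
        (if j = k then 1 else 0) := by
  obtain ⟨ε, h0, h4, h5, h6, h7⟩ : ∃ ε : ℝ, 0 < ε ∧ ε ≤ 1 / 4 ∧ ε ≤ α / 2 ∧ ε ≤ (1 - α) / 2 ∧
      (α = 1 / 2 ∨ 3 * ε ≤ |2 * α - 1|) := by
    have hm : 0 < min (1 / 4) (min (α / 2) ((1 - α) / 2)) := by
      refine lt_min (by norm_num) (lt_min ?_ ?_) <;> linarith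
    have l1 := min_le_left (1 / 4) (min (α / 2) ((1 - α) / 2))
    have l2 := (min_le_right (1 / 4) (min (α / 2) ((1 - α) / 2))).trans (min_le_left _ _)
    have l3 := (min_le_right (1 / 4) (min (α / 2) ((1 - α) / 2))).trans (min_le_right _ _)
    by_cases hα : α = 1 / 2
    · exact ⟨_, hm, l1, l2, l3, Or.inl hα⟩
    · have hp : 0 < |2 * α - 1| := abs_pos.2 fun h => hα (by linarith)
      refine ⟨min (min (1 / 4) (min (α / 2) ((1 - α) / 2))) (|2 * α - 1| / 3),
        lt_min hm (by linarith), (min_le_left _ _).trans l1, (min_le_left _ _).trans l2,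
        (min_le_left _ _).trans l3, Or.inr ?_⟩
      have := min_le_right (min (1 / 4) (min (α / 2) ((1 - α) / 2))) (|2 * α - 1| / 3)
      linarith
  refine ⟨ε, h0, fun rv rz hrz hr hrε => ?_⟩
  have hrz1 : rz ≤ 1 / 4 := by linarith
  have hrv : 0 < rv := by linarith
  have hG : ∀ v ∈ Metric.sphere ((α : ℂ) - 1) rv, Good α rz v := fun v hv =>
    good_of α rv rz ε hα0 hα1 hrz hr hrε h4 h5 h6 h7 v (mem_sphere_iff_norm.1 hv)
  by_cases hj : j ≤ M
  · have hs := low_sum M α n j k t hn hkn hj rv rz hrz hrz1 hrv hG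
    by_cases hk : k ≤ M
    · rwa [ll_eval M α n j k t hn hk rv rz hrz hrz1 hrv (by linarith) hG] at hs
    · rw [lh_eval M α n j k t hn hkn hk rv rz hrz hrz1 hrv hG, mul_zero, mul_zero] at hs
      rwa [if_neg (by omega)]
  · have hs := high_sum M α n j k t hn hkn hj rv rz hrz hrz1
    by_cases hk : k ≤ M
    · rw [hl_eval M α n j k t hn hjn hj hk rz hrz hrz1] at hs
      rwa [if_neg (by omega)]
    · rwa [hh_eval M α n j k t hkn hk rz hrz hrz1] at hs

end OrthAux

/-- Orthogonality `∑_{x∈ℤ} Φ^{n,t}_{n-j}(x) Ψ^{n,t}_{n-k}(x) = δ_{j,k}` for `n ≥ M+1`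
(absolute convergence included); in particular the sum vanishes when `j ≥ M+1, k ≤ M`
and when `j ≤ M, k ≥ M+1`. -/
theorem orthogonality_case_n_ge_M_plus_one
    (M : ℕ) (hM : 1 ≤ M) (α : ℝ) (hα0 : 0 < α) (hα1 : α < 1)
    (t : ℝ) (ht : 0 ≤ t) (n : ℕ) (hn : M + 1 ≤ n) (j k : ℕ)
    (hj1 : 1 ≤ j) (hjn : j ≤ n) (hk1 : 1 ≤ k) (hkn : k ≤ n) :
    ∃ ε > 0, ∀ rv rz : ℝ, 0 < rz → rz < rv → rv < ε →
      Summable (fun x : ℤ => ‖Phi M α n j t rv rz x * Psi M α n k t x‖) ∧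
      (∑' x : ℤ, Phi M α n j t rv rz x * Psi M α n k t x) =
        if j = k then 1 else 0 := by
  obtain ⟨ε, hε, h⟩ := OrthAux.main_hasSum M α hα0 hα1 t n hn j k hjn hkn
  exact ⟨ε, hε, fun rv rz h1 h2 h3 =>
    ⟨(h rv rz h1 h2 h3).summable.norm, (h rv rz h1 h2 h3).tsum_eq⟩⟩
end
end

section
/- Let α > 0 be a real with α ≠ 1, n₁, n₂ ≥ 1 integers, t₁, t₂ ≥ 0 reals and x₁, x₂ ∈ ℤ. For each integer M ≥ 1 define K̂^{(2)}_M(x₁,x₂) := (1/(2πi))³ ∮ dv ∮ dz ∮ (dw/w) e^{t₁w}(w(w−1))^{n₁}(w(w−α))^{M} w^{−(x₁+2n₁+1)}·w · (1+z)^{x₂+2n₂} e^{−t₂(z+1)}(z(z+1))^{−n₂} ((v+1)(v+1−α))^{−M} (1+2z)(2v+2−α)/[(z−v)(z+v+1)(w−1−v)(w+1−α+v)], where the v-contour encloses exactly α−1, for each v the z-contour encloses exactly 0 and v, and for each v the w-contour encloses exactly 0 and α−1−v (this is the triple-integral kernel term for M slow particles evaluated at particle indices M+n₁ and M+n₂).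 Then lim_{M→∞} K̂^{(2)}_M(x₁,x₂) = −(1/(2πi))² ∮ dw ∮ dv e^{t₁w}(w−1)^{n₁} w^{−(x₁+n₁+1)} (1+v)^{x₂+n₂} e^{−t₂(v+1)} v^{−n₂} (1+2v)/((v+w+1−α)(w−v−α)), where the w-contour encloses exactly 0 and, for each w, the v-contour encloses exactly 0 and α−1−w. -/
open Complex Real MeasureTheory Filter

noncomputable section

/-- Integrand of the triple contour integral `K̂^{(2)}_M` (kernel term for `M` slow
particles, evaluated at particle indices `M+n₁`, `M+n₂`). -/
def K2Int (M : ℕ) (α : ℝ) (n₁ n₂ : ℕ) (t₁ t₂ : ℝ) (x₁ x₂ : ℤ) (v z w : ℂ) : ℂ :=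
  Complex.exp ((t₁ : ℂ) * w) * (w * (w - 1)) ^ n₁ * (w * (w - (α : ℂ))) ^ M *
    w ^ (-(x₁ + 2 * (n₁ : ℤ) + 1)) *
    (1 + z) ^ (x₂ + 2 * (n₂ : ℤ)) * Complex.exp (-((t₂ : ℂ) * (z + 1))) *
    (z * (z + 1)) ^ (-(n₂ : ℤ)) * ((v + 1) * (v + 1 - (α : ℂ))) ^ (-(M : ℤ)) *
    ((1 + 2 * z) * (2 * v + 2 - (α : ℂ))) /
    ((z - v) * (z + v + 1) * (w - 1 - v) * (w + 1 - (α : ℂ) + v))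

/-- `K̂^{(2)}_M(x₁,x₂)`: the `v`-contour encloses exactly `α-1`, for each `v` the
`z`-contour encloses exactly `0` and `v`, and the `w`-contour encloses exactly `0`
and `α-1-v`. -/
def K2hat (M : ℕ) (α : ℝ) (n₁ n₂ : ℕ) (t₁ t₂ : ℝ) (x₁ x₂ : ℤ) (rv rz rw : ℝ) : ℂ :=
  (2 * (π : ℂ) * I)⁻¹ * ∮ v in C((α : ℂ) - 1, rv),
    (2 * (π : ℂ) * I)⁻¹ *
      ((∮ z in C((0 : ℂ), rz), (2 * (π : ℂ) * I)⁻¹ *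
          ((∮ w in C((0 : ℂ), rw), K2Int M α n₁ n₂ t₁ t₂ x₁ x₂ v z w) +
           (∮ w in C((α : ℂ) - 1 - v, rw), K2Int M α n₁ n₂ t₁ t₂ x₁ x₂ v z w))) +
       (∮ z in C(v, rz), (2 * (π : ℂ) * I)⁻¹ *
          ((∮ w in C((0 : ℂ), rw), K2Int M α n₁ n₂ t₁ t₂ x₁ x₂ v z w) +
           (∮ w in C((α : ℂ) - 1 - v, rw), K2Int M α n₁ n₂ t₁ t₂ x₁ x₂ v z w))))

/-- Integrand of the limiting (`M = ∞`) double contour integral. -/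
def KInfInt (α : ℝ) (n₁ n₂ : ℕ) (t₁ t₂ : ℝ) (x₁ x₂ : ℤ) (w v : ℂ) : ℂ :=
  Complex.exp ((t₁ : ℂ) * w) * (w - 1) ^ n₁ * w ^ (-(x₁ + (n₁ : ℤ) + 1)) *
    (1 + v) ^ (x₂ + (n₂ : ℤ)) * Complex.exp (-((t₂ : ℂ) * (v + 1))) * v ^ (-(n₂ : ℤ)) *
    (1 + 2 * v) / ((v + w + 1 - (α : ℂ)) * (w - v - (α : ℂ)))


theorem ne_aux (a : ℝ) (u : ℂ) (h : ‖u‖ < |a|) : (a : ℂ) + u ≠ 0 := by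
  intro h0
  have h1 : (a : ℂ) = -u := by linear_combination h0
  have h2 : ‖(a : ℂ)‖ = ‖u‖ := by rw [h1, norm_neg]
  rw [Complex.norm_real, Real.norm_eq_abs] at h2
  linarith

/-- Fubini for circle integrals. -/
theorem circle_swap (f : ℂ → ℂ → ℂ) (a b : ℂ) (ρ r : ℝ)
    (hf : Continuous fun p : ℝ × ℝ => f (circleMap a ρ p.1) (circleMap b r p.2)) :
    (∮ w in C(a, ρ), ∮ z in C(b, r), f w z) = ∮ z in C(b, r), ∮ w in C(a, ρ), f w z := by
  have hc : Continuous (Function.uncurry fun x y : ℝ => (circleMap 0 ρ x * I) * ((circleMap 0 r y * I) *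
      f (circleMap a ρ x) (circleMap b r y))) := by
    simp only [Function.uncurry_def]
    have h1 : Continuous fun p : ℝ × ℝ => circleMap 0 ρ p.1 :=
      (continuous_circleMap 0 ρ).comp continuous_fst
    have h2 : Continuous fun p : ℝ × ℝ => circleMap 0 r p.2 :=
      (continuous_circleMap 0 r).comp continuous_snd
    exact (h1.mul continuous_const).mul ((h2.mul continuous_const).mul hf)
  simp only [circleIntegral, deriv_circleMap, smul_eq_mul]
  simp only [← intervalIntegral.integral_const_mul]
  rw [intervalIntegral_intervalIntegral_swap]
  · congr 1
    ext x
    congr 1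
    ext y
    ring
  · refine (hc.continuousOn.integrableOn_compact (isCompact_uIcc.prod isCompact_uIcc)).mono_set
      (Set.prod_mono Set.uIoc_subset_uIcc Set.uIoc_subset_uIcc)

theorem circle_param_integrable (f : ℂ → ℂ → ℂ) (a b : ℂ) (ρ r : ℝ)
    (hf : Continuous fun p : ℝ × ℝ => f (circleMap a ρ p.1) (circleMap b r p.2)) :
    CircleIntegrable (fun w => ∮ z in C(b, r), f w z) a ρ := by
  have hc : Continuous (Function.uncurry fun x y : ℝ => ((circleMap 0 r y * I) *
      f (circleMap a ρ x) (circleMap b r y))) := by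
    simp only [Function.uncurry_def]
    have h2 : Continuous fun p : ℝ × ℝ => circleMap 0 r p.2 :=
      (continuous_circleMap 0 r).comp continuous_snd
    exact (h2.mul continuous_const).mul hf
  unfold CircleIntegrable
  simp only [circleIntegral, deriv_circleMap, smul_eq_mul]
  exact (intervalIntegral.continuous_parametric_intervalIntegral_of_continuous' hc _ _).intervalIntegrable _ _

/-- Radius independence for functions holomorphic in a punctured disc. -/
theorem circle_indep (f : ℂ → ℂ) (ε : ℝ)
    (hd : ∀ z : ℂ, z ≠ 0 → ‖z‖ < ε → DifferentiableAt ℂ f z) (r R : ℝ)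
    (hr : 0 < r) (hR : 0 < R) (hrε : r < ε) (hRε : R < ε) :
    (∮ z in C(0, R), f z) = ∮ z in C(0, r), f z := by
  have key : ∀ r R : ℝ, 0 < r → r ≤ R → R < ε →
      (∮ z in C(0, R), f z) = ∮ z in C(0, r), f z := by
    intro r R hr hrR hR
    have hd' : ∀ z ∈ Metric.closedBall (0 : ℂ) R \ Metric.ball 0 r, DifferentiableAt ℂ f z := by
      intro z hz
      simp only [Set.mem_sdiff, Metric.mem_closedBall, dist_zero_right, Metric.mem_ball, not_lt] at hz
      exact hd z (norm_pos_iff.1 (by linarith)) (by linarith)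
    refine circleIntegral_eq_of_differentiable_on_annulus_off_countable hr hrR
      Set.countable_empty (fun z hz => (hd' z hz).continuousAt.continuousWithinAt) ?_
    rintro z ⟨⟨h1, h2⟩, -⟩
    exact hd' z ⟨Metric.ball_subset_closedBall h1, fun h => h2 (Metric.ball_subset_closedBall h)⟩
  rcases le_total r R with h | h
  · exact key r R hr h hRε
  · exact (key R r hR h hrε).symm

theorem circle_reflect (f : ℂ → ℂ) (a : ℂ) (R : ℝ) :
    (∮ v in C(a, R), f (a - v)) = - ∮ w in C(0, R), f w := by
  have h1 : ∀ θ : ℝ, a - circleMap a R θ = circleMap 0 R (θ + π) := by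
    intro θ
    simp only [circleMap]
    push_cast
    rw [add_mul, Complex.exp_add, Complex.exp_pi_mul_I]
    ring
  have h2 : ∀ θ : ℝ, circleMap 0 R θ = - circleMap 0 R (θ + π) := by
    intro θ
    rw [← h1]; simp [circleMap]
  simp only [circleIntegral, deriv_circleMap, smul_eq_mul]
  have h3 : ∀ θ : ℝ, circleMap 0 R θ * I * f (a - circleMap a R θ) =
     (fun x => - (circleMap 0 R x * I * f (circleMap 0 R x))) (θ + π) := by
    intro θ
    simp only
    rw [h1, h2]; ring
  simp only [h3]
  rw [intervalIntegral.integral_comp_add_right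
    (fun x => - (circleMap 0 R x * I * f (circleMap 0 R x)))]
  rw [intervalIntegral.integral_neg]
  congr 1
  have hp : Function.Periodic (fun x => circleMap 0 R x * I * f (circleMap 0 R x)) (2 * π) := by
    intro x
    simp only [periodic_circleMap 0 R x]
  have := hp.intervalIntegral_add_eq (0 + π) 0
  rw [zero_add (2 * π)] at this
  rw [← this]
  congr 1
  ring

/-- SmallRadness hypotheses on the radii. -/
structure SmallRad (α ε : ℝ) : Prop where
  pos : 0 < ε
  h1 : 10 * ε ≤ α
  h2 : 10 * ε ≤ |α - 1|
  h3 : 10 * ε ≤ 1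
  h4 : α = 1 / 2 ∨ 10 * ε ≤ |1 - 2 * α|

theorem exists_small (α : ℝ) (hα0 : 0 < α) (hα1 : α ≠ 1) : ∃ ε, SmallRad α ε := by
  have p2 : 0 < |α - 1| := abs_pos.2 (sub_ne_zero.2 hα1)
  by_cases h : α = 1 / 2
  · refine ⟨min α (min |α - 1| 1) / 10, ⟨by positivity, ?_, ?_, ?_, Or.inl h⟩⟩
    · have := min_le_left α (min |α - 1| 1)
      linarith
    · have := (min_le_right α (min |α - 1| 1)).trans (min_le_left _ _)
      linarith
    · have := (min_le_right α (min |α - 1| 1)).trans (min_le_right _ _)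
      linarith
  · have p3 : 0 < |1 - 2 * α| := abs_pos.2 (fun h' => h (by linarith))
    have q := min_le_right (min α (min |α - 1| 1)) |1 - 2 * α|
    have q' := min_le_left (min α (min |α - 1| 1)) |1 - 2 * α|
    refine ⟨min (min α (min |α - 1| 1)) |1 - 2 * α| / 10, ⟨by positivity, ?_, ?_, ?_, Or.inr (by linarith)⟩⟩
    · have := min_le_left α (min |α - 1| 1)
      linarith
    · have := (min_le_right α (min |α - 1| 1)).trans (min_le_left _ _)
      linarith
    · have := (min_le_right α (min |α - 1| 1)).trans (min_le_right _ _)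
      linarith


theorem SmallRad.one_add {α ε : ℝ} (hS : SmallRad α ε) {u : ℂ} (hu : ‖u‖ < 10 * ε) : 1 + u ≠ 0 := by
  have := ne_aux 1 u (by rw [abs_one]; linarith [hS.h3])
  simpa using this

theorem SmallRad.al_add {α ε : ℝ} (hS : SmallRad α ε) {u : ℂ} (hu : ‖u‖ < 10 * ε) : (α : ℂ) + u ≠ 0 :=
  ne_aux α u (by rw [abs_of_pos (by linarith [hS.pos, hS.h1])]; linarith [hS.h1])

theorem SmallRad.al1_add {α ε : ℝ} (hS : SmallRad α ε) {u : ℂ} (hu : ‖u‖ < 10 * ε) : (α : ℂ) - 1 + u ≠ 0 := by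
  have := ne_aux (α - 1) u (by linarith [hS.h2])
  simpa using this

theorem SmallRad.half {α ε : ℝ} (hS : SmallRad α ε) {w d : ℂ} (hw : ‖w‖ < ε) (hd : ‖d‖ < ‖w‖) :
    2 * w + 1 - 2 * (α : ℂ) - d ≠ 0 := by
  rcases hS.h4 with h | h
  · subst h
    intro h0
    have : 2 * w = d := by
      push_cast at h0
      linear_combination h0
    have h2 : ‖2 * w‖ = ‖d‖ := by rw [this]
    rw [norm_mul, Complex.norm_ofNat] at h2
    linarith [norm_nonneg w]
  · have h3 : ‖2 * w - d‖ ≤ 2 * ‖w‖ + ‖d‖ := by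
      refine (norm_sub_le _ _).trans ?_
      rw [norm_mul, Complex.norm_ofNat]
    have := ne_aux (1 - 2 * α) (2 * w - d) (by linarith [hS.pos])
    intro h0
    apply this
    push_cast
    linear_combination h0

theorem KInf_diff {α ε : ℝ} (hS : SmallRad α ε) (n₁ n₂ : ℕ) (t₁ t₂ : ℝ) (x₁ x₂ : ℤ)
    (w z : ℂ) (hw0 : w ≠ 0) (hz0 : z ≠ 0) (hw : ‖w‖ < ε) (hz : ‖z‖ < ε) :
    DifferentiableAt ℂ (fun p : ℂ × ℂ => KInfInt α n₁ n₂ t₁ t₂ x₁ x₂ p.1 p.2) (w, z) := by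
  have hp := hS.pos
  have d1 : z + w + 1 - (α : ℂ) ≠ 0 := by
    have := hS.al1_add (u := -(z + w)) (by
      rw [norm_neg]; linarith [norm_add_le z w])
    intro h0; apply this; linear_combination -h0
  have d2 : w - z - (α : ℂ) ≠ 0 := by
    have := hS.al_add (u := -(w - z)) (by
      rw [norm_neg]; linarith [norm_sub_le w z])
    intro h0; apply this; linear_combination -h0
  have d3 : 1 + z ≠ 0 := hS.one_add (by linarith)
  have e1 : DifferentiableAt ℂ (fun p : ℂ × ℂ => p.1) (w, z) := differentiableAt_fst
  have e2 : DifferentiableAt ℂ (fun p : ℂ × ℂ => p.2) (w, z) := differentiableAt_snd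
  have f1 : DifferentiableAt ℂ (fun p : ℂ × ℂ => p.1 ^ (-(x₁ + (n₁ : ℤ) + 1))) (w, z) :=
    e1.zpow (Or.inl hw0)
  have f2 : DifferentiableAt ℂ (fun p : ℂ × ℂ => p.2 ^ (-(n₂ : ℤ))) (w, z) :=
    e2.zpow (Or.inl hz0)
  have f3 : DifferentiableAt ℂ (fun p : ℂ × ℂ => (1 + p.2) ^ (x₂ + (n₂ : ℤ))) (w, z) :=
    (e2.const_add 1).zpow (Or.inl d3)
  have f4 : DifferentiableAt ℂ (fun p : ℂ × ℂ => ((p.2 + p.1 + 1 - (α : ℂ)) * (p.1 - p.2 - (α : ℂ)))) (w, z) := by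
    fun_prop
  unfold KInfInt
  simp only [div_eq_mul_inv]
  refine DifferentiableAt.mul ?_ (f4.fun_inv (mul_ne_zero d1 d2))
  refine DifferentiableAt.mul (DifferentiableAt.mul (DifferentiableAt.mul (DifferentiableAt.mul (DifferentiableAt.mul ?_ f1) f3) ?_) f2) ?_
  all_goals fun_prop

/-- the residue part -/
def Res (α : ℝ) (n₁ n₂ : ℕ) (t₁ t₂ : ℝ) (x₁ x₂ : ℤ) (w : ℂ) : ℂ :=
  -(2 * (π : ℂ) * I * (Complex.exp ((t₁ : ℂ) * w) * (w - 1) ^ n₁ * w ^ (-(x₁ + (n₁ : ℤ) + 1)) *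
    ((α : ℂ) - w) ^ (x₂ + (n₂ : ℤ)) * Complex.exp (-((t₂ : ℂ) * ((α : ℂ) - w))) *
    ((α : ℂ) - 1 - w) ^ (-(n₂ : ℤ))))

theorem Res_diff {α ε : ℝ} (hS : SmallRad α ε) (n₁ n₂ : ℕ) (t₁ t₂ : ℝ) (x₁ x₂ : ℤ)
    (w : ℂ) (hw0 : w ≠ 0) (hw : ‖w‖ < ε) :
    DifferentiableAt ℂ (Res α n₁ n₂ t₁ t₂ x₁ x₂) w := by
  have hp := hS.pos
  have d1 : (α : ℂ) - w ≠ 0 := by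
    rw [sub_eq_add_neg]; exact hS.al_add (by rw [norm_neg]; linarith)
  have d2 : (α : ℂ) - 1 - w ≠ 0 := by
    rw [sub_eq_add_neg]; exact hS.al1_add (by rw [norm_neg]; linarith)
  have f1 : DifferentiableAt ℂ (fun w : ℂ => w ^ (-(x₁ + (n₁ : ℤ) + 1))) w :=
    differentiableAt_id.zpow (Or.inl hw0)
  have f2 : DifferentiableAt ℂ (fun w : ℂ => ((α : ℂ) - w) ^ (x₂ + (n₂ : ℤ))) w :=
    (differentiableAt_id.const_sub _).zpow (Or.inl d1)
  have f3 : DifferentiableAt ℂ (fun w : ℂ => ((α : ℂ) - 1 - w) ^ (-(n₂ : ℤ))) w :=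
    (differentiableAt_id.const_sub _).zpow (Or.inl d2)
  unfold Res
  refine DifferentiableAt.neg (DifferentiableAt.mul (by fun_prop) ?_)
  refine DifferentiableAt.mul (DifferentiableAt.mul (DifferentiableAt.mul (DifferentiableAt.mul ?_ f1) f2) ?_) f3
  all_goals fun_prop

theorem KInf_res {α ε : ℝ} (hS : SmallRad α ε) (n₁ n₂ : ℕ) (t₁ t₂ : ℝ) (x₁ x₂ : ℤ)
    (w : ℂ) (r : ℝ) (hw : ‖w‖ < ε) (hr : 0 < r) (hrw : r < ‖w‖) :
    (∮ v in C((α : ℂ) - 1 - w, r), KInfInt α n₁ n₂ t₁ t₂ x₁ x₂ w v) =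
      Res α n₁ n₂ t₁ t₂ x₁ x₂ w := by
  have hp := hS.pos
  set c : ℂ := (α : ℂ) - 1 - w with hc
  set f : ℂ → ℂ := fun v => Complex.exp ((t₁ : ℂ) * w) * (w - 1) ^ n₁ * w ^ (-(x₁ + (n₁ : ℤ) + 1)) *
    (1 + v) ^ (x₂ + (n₂ : ℤ)) * Complex.exp (-((t₂ : ℂ) * (v + 1))) * v ^ (-(n₂ : ℤ)) *
    (1 + 2 * v) / (w - v - (α : ℂ)) with hf
  have h1 : ∀ v, KInfInt α n₁ n₂ t₁ t₂ x₁ x₂ w v = (v - c)⁻¹ • f v := by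
    intro v
    simp only [KInfInt, hf, hc, smul_eq_mul, div_eq_mul_inv, mul_inv]
    rw [show v + w + 1 - (α : ℂ) = v - ((α : ℂ) - 1 - w) by ring]
    ring
  simp only [h1]
  have hd : DifferentiableOn ℂ f (Metric.closedBall c r) := by
    intro v hv
    apply DifferentiableAt.differentiableWithinAt
    have hv' : ‖v - c‖ ≤ r := by simpa [dist_eq_norm] using hv
    have d1 : 1 + v ≠ 0 := by
      have := hS.al_add (u := (v - c) - w) (by linarith [norm_sub_le (v - c) w])
      intro h0; apply this; rw [hc]; linear_combination h0
    have d2 : v ≠ 0 := by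
      have := hS.al1_add (u := (v - c) - w) (by linarith [norm_sub_le (v - c) w])
      intro h0; apply this; rw [hc]; linear_combination h0
    have d3 : w - v - (α : ℂ) ≠ 0 := by
      have := hS.half (w := w) (d := v - c) hw (by linarith)
      intro h0; apply this; rw [hc]; linear_combination h0
    have f1 : DifferentiableAt ℂ (fun v : ℂ => (1 + v) ^ (x₂ + (n₂ : ℤ))) v :=
      (differentiableAt_id.const_add _).zpow (Or.inl d1)
    have f2 : DifferentiableAt ℂ (fun v : ℂ => v ^ (-(n₂ : ℤ))) v :=
      (differentiableAt_id).zpow (Or.inl d2)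
    refine DifferentiableAt.div ?_ (by fun_prop) d3
    refine DifferentiableAt.mul (DifferentiableAt.mul (DifferentiableAt.mul (DifferentiableAt.mul ?_ f1) ?_) f2) ?_
    all_goals fun_prop
  rw [hd.circleIntegral_sub_inv_smul (Metric.mem_ball_self hr)]
  have d3 : 2 * w + 1 - 2 * (α : ℂ) ≠ 0 := by
    have := hS.half (w := w) (d := 0) hw (by rw [norm_zero]; linarith)
    simpa using this
  simp only [hf, hc, Res, smul_eq_mul]
  rw [show w - ((α : ℂ) - 1 - w) - α = 2 * w + 1 - 2 * α by ring,
    show 1 + 2 * ((α : ℂ) - 1 - w) = - (2 * w + 1 - 2 * α) by ring,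
    show 1 + ((α : ℂ) - 1 - w) = α - w by ring,
    show ((α : ℂ) - 1 - w) + 1 = α - w by ring]
  field_simp

theorem KInf_indep {α ε : ℝ} (hS : SmallRad α ε) (n₁ n₂ : ℕ) (t₁ t₂ : ℝ) (x₁ x₂ : ℤ)
    (ρ r ρ' r' : ℝ) (hr : 0 < r) (hrρ : r < ρ) (hρ : ρ < ε)
    (hr' : 0 < r') (hrρ' : r' < ρ') (hρ' : ρ' < ε) :
    (∮ w in C((0 : ℂ), ρ), ((∮ v in C((0 : ℂ), r), KInfInt α n₁ n₂ t₁ t₂ x₁ x₂ w v) +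
               (∮ v in C((α : ℂ) - 1 - w, r), KInfInt α n₁ n₂ t₁ t₂ x₁ x₂ w v))) =
    (∮ w in C((0 : ℂ), ρ'), ((∮ v in C((0 : ℂ), r'), KInfInt α n₁ n₂ t₁ t₂ x₁ x₂ w v) +
               (∮ v in C((α : ℂ) - 1 - w, r'), KInfInt α n₁ n₂ t₁ t₂ x₁ x₂ w v))) := by
  have hcont : ∀ ρ r : ℝ, 0 < ρ → 0 < r → ρ < ε → r < ε → Continuous fun p : ℝ × ℝ =>
      KInfInt α n₁ n₂ t₁ t₂ x₁ x₂ (circleMap 0 ρ p.1) (circleMap 0 r p.2) := by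
    intro ρ r h1 h2 h3 h4
    rw [continuous_iff_continuousAt]
    intro p
    have := (KInf_diff hS n₁ n₂ t₁ t₂ x₁ x₂ (circleMap 0 ρ p.1) (circleMap 0 r p.2)
      (circleMap_ne_center h1.ne') (circleMap_ne_center h2.ne')
      (by simpa [abs_of_pos h1] using h3) (by simpa [abs_of_pos h2] using h4)).continuousAt
    have hg : ContinuousAt (fun p : ℝ × ℝ => (circleMap 0 ρ p.1, circleMap 0 r p.2)) p :=
      ((continuous_circleMap 0 ρ).comp continuous_fst |>.prodMk
        ((continuous_circleMap 0 r).comp continuous_snd)).continuousAt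
    exact ContinuousAt.comp (f := fun p : ℝ × ℝ => (circleMap 0 ρ p.1, circleMap 0 r p.2)) this hg
  have split : ∀ ρ r : ℝ, 0 < r → r < ρ → ρ < ε →
      (∮ w in C((0 : ℂ), ρ), ((∮ v in C((0 : ℂ), r), KInfInt α n₁ n₂ t₁ t₂ x₁ x₂ w v) +
               (∮ v in C((α : ℂ) - 1 - w, r), KInfInt α n₁ n₂ t₁ t₂ x₁ x₂ w v))) =
      (∮ w in C((0 : ℂ), ρ), ∮ v in C((0 : ℂ), r), KInfInt α n₁ n₂ t₁ t₂ x₁ x₂ w v) +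
       ∮ w in C((0 : ℂ), ρ), Res α n₁ n₂ t₁ t₂ x₁ x₂ w := by
    intro ρ r h1 h2 h3
    have hρ0 : 0 < ρ := h1.trans h2
    rw [← circleIntegral.integral_add]
    · refine circleIntegral.integral_congr hρ0.le ?_
      intro w hw
      have hw' : ‖w‖ = ρ := by simpa using hw
      simp only
      rw [KInf_res hS n₁ n₂ t₁ t₂ x₁ x₂ w r (by linarith) h1 (by linarith)]
    · exact circle_param_integrable _ _ _ _ _ (hcont ρ r hρ0 h1 h3 (h2.trans h3))
    · refine ContinuousOn.circleIntegrable hρ0.le ?_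
      intro w hw
      have hw' : ‖w‖ = ρ := by simpa using hw
      exact (Res_diff hS n₁ n₂ t₁ t₂ x₁ x₂ w (norm_pos_iff.1 (by linarith))
        (by linarith)).continuousAt.continuousWithinAt
  have hρ0 : 0 < ρ := hr.trans hrρ
  have hρ0' : 0 < ρ' := hr'.trans hrρ'
  rw [split ρ r hr hrρ hρ, split ρ' r' hr' hrρ' hρ']
  congr 1
  · have s1 : (∮ w in C((0 : ℂ), ρ), ∮ v in C((0 : ℂ), r), KInfInt α n₁ n₂ t₁ t₂ x₁ x₂ w v) =
      (∮ w in C((0 : ℂ), ρ), ∮ v in C((0 : ℂ), r'), KInfInt α n₁ n₂ t₁ t₂ x₁ x₂ w v) := by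
      refine circleIntegral.integral_congr hρ0.le ?_
      intro w hw
      have hw' : ‖w‖ = ρ := by simpa using hw
      refine circle_indep _ ε ?_ _ _ hr' hr (by linarith) (by linarith)
      intro z hz hz'
      have := KInf_diff hS n₁ n₂ t₁ t₂ x₁ x₂ w z (norm_pos_iff.1 (by linarith)) hz (by linarith) hz'
      exact DifferentiableAt.comp (f := fun z => (w, z)) z this (by fun_prop)
    rw [s1, circle_swap _ _ _ _ _ (hcont ρ r' hρ0 hr' hρ (by linarith)),
      circle_swap _ _ _ _ _ (hcont ρ' r' hρ0' hr' hρ' (by linarith))]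
    refine circleIntegral.integral_congr hr'.le ?_
    intro z hz
    have hz' : ‖z‖ = r' := by simpa using hz
    refine circle_indep _ ε ?_ _ _ hρ0' hρ0 (by linarith) (by linarith)
    intro w hw hw'
    have := KInf_diff hS n₁ n₂ t₁ t₂ x₁ x₂ w z hw (norm_pos_iff.1 (by linarith)) hw' (by linarith)
    exact DifferentiableAt.comp (f := fun w => (w, z)) w this (by fun_prop)
  · exact circle_indep _ ε (fun w h1 h2 => Res_diff hS n₁ n₂ t₁ t₂ x₁ x₂ w h1 h2) _ _ hρ0' hρ0
      (by linarith) (by linarith)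

theorem w_int {α ε : ℝ} (hS : SmallRad α ε) (n₁ n₂ : ℕ) (t₁ t₂ : ℝ) (x₁ x₂ : ℤ) (M : ℕ)
    (hM : x₁ + n₁ + 1 ≤ (M : ℤ)) (v z : ℂ) (rv rw : ℝ) (hv : ‖v - ((α : ℂ) - 1)‖ = rv)
    (h0 : 0 < rw) (h1 : rw < rv) (h2 : rv < ε) (hz : 1 + z ≠ 0) :
    (2 * (π : ℂ) * I)⁻¹ *
          ((∮ w in C((0 : ℂ), rw), K2Int M α n₁ n₂ t₁ t₂ x₁ x₂ v z w) +
           (∮ w in C((α : ℂ) - 1 - v, rw), K2Int M α n₁ n₂ t₁ t₂ x₁ x₂ v z w)) =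
    KInfInt α n₁ n₂ t₁ t₂ x₁ x₂ ((α : ℂ) - 1 - v) z := by
  have hp := hS.pos
  set c : ℂ := (α : ℂ) - 1 - v with hc
  have hcn : ‖c‖ = rv := by rw [← hv, ← norm_neg]; congr 1; rw [hc]; ring
  have hc0 : c ≠ 0 := norm_pos_iff.1 (by linarith)
  have hvc : v = (α : ℂ) - 1 - c := by rw [hc]; ring
  clear_value c
  subst hvc
  set Q : ℂ := (1 + z) ^ (x₂ + 2 * (n₂ : ℤ)) * Complex.exp (-((t₂ : ℂ) * (z + 1))) *
    (z * (z + 1)) ^ (-(n₂ : ℤ)) * (((α : ℂ) - 1 - c + 1) * ((α : ℂ) - 1 - c + 1 - (α : ℂ))) ^ (-(M : ℤ)) *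
    ((1 + 2 * z) * (2 * ((α : ℂ) - 1 - c) + 2 - (α : ℂ))) * (z - ((α : ℂ) - 1 - c))⁻¹ *
      (z + ((α : ℂ) - 1 - c) + 1)⁻¹ with hQ
  have den : ∀ w : ℂ, ‖w‖ < 5 * ε → w - (α : ℂ) + c ≠ 0 := by
    intro w hw
    have := hS.al_add (u := -(w + c)) (by rw [norm_neg]; linarith [norm_add_le w c])
    intro h0; apply this; linear_combination -h0
  have I1 : (∮ w in C((0 : ℂ), rw), K2Int M α n₁ n₂ t₁ t₂ x₁ x₂ ((α : ℂ) - 1 - c) z w) = 0 := by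
    obtain ⟨k, hk⟩ : ∃ k : ℕ, (k : ℤ) = M - (x₁ + n₁ + 1) :=
      ⟨(M - (x₁ + n₁ + 1)).toNat, Int.toNat_of_nonneg (by linarith)⟩
    have hcongr : Set.EqOn (fun w => K2Int M α n₁ n₂ t₁ t₂ x₁ x₂ ((α : ℂ) - 1 - c) z w)
        (fun w => Complex.exp ((t₁ : ℂ) * w) * (w - 1) ^ n₁ * (w - (α : ℂ)) ^ M * w ^ k * Q *
          ((w - (α : ℂ) + c)⁻¹ * (w - c)⁻¹)) (Metric.sphere 0 rw) := by
      intro w hw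
      have hw' : ‖w‖ = rw := by simpa using hw
      have hw0 : w ≠ 0 := norm_pos_iff.1 (by linarith)
      have e : w ^ n₁ * w ^ M * w ^ (-(x₁ + 2 * (n₁ : ℤ) + 1)) = w ^ k := by
        rw [← zpow_natCast w k, ← zpow_natCast w n₁, ← zpow_natCast w M, ← zpow_add₀ hw0,
          ← zpow_add₀ hw0]
        congr 1
        rw [hk]; ring
      simp only [K2Int, hQ, ← e, mul_pow, div_eq_mul_inv, mul_inv]
      rw [show w - 1 - ((α : ℂ) - 1 - c) = w - α + c by ring,
        show w + 1 - (α : ℂ) + ((α : ℂ) - 1 - c) = w - c by ring]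
      ring
    rw [circleIntegral.integral_congr h0.le hcongr]
    have hd : DifferentiableOn ℂ (fun w => Complex.exp ((t₁ : ℂ) * w) * (w - 1) ^ n₁ * (w - (α : ℂ)) ^ M * w ^ k * Q *
          ((w - (α : ℂ) + c)⁻¹ * (w - c)⁻¹)) (Metric.closedBall 0 rw) := by
      intro w hw
      apply DifferentiableAt.differentiableWithinAt
      have hw' : ‖w‖ ≤ rw := by simpa using hw
      have e1 := den w (by linarith)
      have e2 : w - c ≠ 0 := by
        intro h
        rw [sub_eq_zero.1 h] at hw'
        linarith
      have g1 : DifferentiableAt ℂ (fun w : ℂ => (w - (α : ℂ) + c)⁻¹) w :=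
        DifferentiableAt.fun_inv (by fun_prop) e1
      have g2 : DifferentiableAt ℂ (fun w : ℂ => (w - c)⁻¹) w :=
        DifferentiableAt.fun_inv (by fun_prop) e2
      refine DifferentiableAt.mul (by fun_prop) (g1.mul g2)
    exact (hd.mono Metric.closure_ball_subset_closedBall).diffContOnCl.circleIntegral_eq_zero h0.le
  set f : ℂ → ℂ := fun w => Complex.exp ((t₁ : ℂ) * w) * (w * (w - 1)) ^ n₁ * (w * (w - (α : ℂ))) ^ M *
    w ^ (-(x₁ + 2 * (n₁ : ℤ) + 1)) * Q * (w - (α : ℂ) + c)⁻¹ with hf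
  have hcongr : ∀ w, K2Int M α n₁ n₂ t₁ t₂ x₁ x₂ ((α : ℂ) - 1 - c) z w = (w - c)⁻¹ • f w := by
    intro w
    simp only [K2Int, hf, hQ, smul_eq_mul, div_eq_mul_inv, mul_inv]
    rw [show w - 1 - ((α : ℂ) - 1 - c) = w - α + c by ring,
        show w + 1 - (α : ℂ) + ((α : ℂ) - 1 - c) = w - c by ring]
    ring
  have I2 : (∮ w in C(c, rw), K2Int M α n₁ n₂ t₁ t₂ x₁ x₂ ((α : ℂ) - 1 - c) z w)
      = 2 * (π : ℂ) * I * f c := by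
    simp only [hcongr]
    have hd : DifferentiableOn ℂ f (Metric.closedBall c rw) := by
      intro w hw
      apply DifferentiableAt.differentiableWithinAt
      have hw' : ‖w - c‖ ≤ rw := by simpa [dist_eq_norm] using hw
      have hw3 : ‖w‖ ≤ ‖w - c‖ + ‖c‖ := by
        simpa using norm_add_le (w - c) c
      have hw0 : w ≠ 0 := by
        rintro rfl
        rw [zero_sub, norm_neg] at hw'
        linarith
      have e1 := den w (by linarith)
      have g1 : DifferentiableAt ℂ (fun w : ℂ => (w - (α : ℂ) + c)⁻¹) w :=
        DifferentiableAt.fun_inv (by fun_prop) e1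
      have g2 : DifferentiableAt ℂ (fun w : ℂ => w ^ (-(x₁ + 2 * (n₁ : ℤ) + 1))) w :=
        differentiableAt_id.zpow (Or.inl hw0)
      refine DifferentiableAt.mul (DifferentiableAt.mul (DifferentiableAt.mul ?_ g2) ?_) g1
      all_goals fun_prop
    rw [hd.circleIntegral_sub_inv_smul (Metric.mem_ball_self h0), smul_eq_mul]
  rw [I1, I2, zero_add]
  have hpi : (2 * (π : ℂ) * I) ≠ 0 := by simp [Real.pi_ne_zero]
  rw [inv_mul_cancel_left₀ hpi]
  have a1 : c - (α : ℂ) ≠ 0 := by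
    have := hS.al_add (u := -c) (by rw [norm_neg]; linarith)
    intro h0; apply this; linear_combination -h0
  have a2 := den c (by linarith)
  have e1 : (((α : ℂ) - 1 - c + 1) * ((α : ℂ) - 1 - c + 1 - (α : ℂ))) ^ (-(M : ℤ)) =
      ((c * (c - (α : ℂ))) ^ M)⁻¹ := by
    rw [zpow_neg, zpow_natCast]
    congr 2
    ring
  have e2 : c ^ n₁ * c ^ (-(x₁ + 2 * (n₁ : ℤ) + 1)) = c ^ (-(x₁ + (n₁ : ℤ) + 1)) := by
    rw [← zpow_natCast c n₁, ← zpow_add₀ hc0]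
    congr 1; ring
  have e3 : (1 + z) ^ (x₂ + 2 * (n₂ : ℤ)) * (z * (z + 1)) ^ (-(n₂ : ℤ)) =
      (1 + z) ^ (x₂ + (n₂ : ℤ)) * z ^ (-(n₂ : ℤ)) := by
    rw [mul_zpow, add_comm z 1, mul_left_comm, ← zpow_add₀ hz, mul_comm]
    congr 2; ring
  have e4 : (c * (c - (α : ℂ))) ^ M * ((c * (c - (α : ℂ))) ^ M)⁻¹ = 1 :=
    mul_inv_cancel₀ (pow_ne_zero _ (mul_ne_zero hc0 a1))
  have e5 : (c - (α : ℂ) + c) * (c - (α : ℂ) + c)⁻¹ = 1 := mul_inv_cancel₀ a2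
  have e6 : (z - ((α : ℂ) - 1 - c))⁻¹ * (z + ((α : ℂ) - 1 - c) + 1)⁻¹ =
      -((z + c + 1 - (α : ℂ))⁻¹ * (c - z - (α : ℂ))⁻¹) := by
    rw [show z - ((α : ℂ) - 1 - c) = z + c + 1 - α by ring,
      show z + ((α : ℂ) - 1 - c) + 1 = -(c - z - α) by ring, inv_neg]
    ring
  simp only [hf, hQ, KInfInt, e1, div_eq_mul_inv, mul_inv]
  rw [mul_pow c (c - 1) n₁, ← e2]
  calc _ = (Complex.exp ((t₁ : ℂ) * c) * (c ^ n₁ * (c - 1) ^ n₁) * c ^ (-(x₁ + 2 * (n₁ : ℤ) + 1))) *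
      Complex.exp (-((t₂ : ℂ) * (z + 1))) * (1 + 2 * z) *
      ((1 + z) ^ (x₂ + 2 * (n₂ : ℤ)) * (z * (z + 1)) ^ (-(n₂ : ℤ))) *
      ((c * (c - (α : ℂ))) ^ M * ((c * (c - (α : ℂ))) ^ M)⁻¹) *
      -((c - (α : ℂ) + c) * (c - (α : ℂ) + c)⁻¹) *
      ((z - ((α : ℂ) - 1 - c))⁻¹ * (z + ((α : ℂ) - 1 - c) + 1)⁻¹) := by ring
    _ = _ := by
      rw [e3, e4, e5, e6]; ring

/-- `lim_{M→∞} K̂^{(2)}_M(x₁,x₂)` equals the double contour integral, where the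
`w`-contour encloses exactly `0` and, for each `w`, the `v`-contour encloses exactly
`0` and `α-1-w`. -/
theorem K2hat_limit_M_infinity
    (α : ℝ) (hα0 : 0 < α) (hα1 : α ≠ 1)
    (n₁ n₂ : ℕ) (hn₁ : 1 ≤ n₁) (hn₂ : 1 ≤ n₂)
    (t₁ t₂ : ℝ) (ht₁ : 0 ≤ t₁) (ht₂ : 0 ≤ t₂) (x₁ x₂ : ℤ) :
    ∃ ε > 0, ∀ rv rz rw rw' rv' : ℝ,
      0 < rz → rz < rv → 0 < rw → rw < rv → rv < ε →
      0 < rv' → rv' < rw' → rw' < ε →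
      Tendsto (fun M : ℕ => K2hat M α n₁ n₂ t₁ t₂ x₁ x₂ rv rz rw) atTop
        (nhds (-((2 * (π : ℂ) * I)⁻¹ * ∮ w in C((0 : ℂ), rw'),
            (2 * (π : ℂ) * I)⁻¹ *
              ((∮ v in C((0 : ℂ), rv'), KInfInt α n₁ n₂ t₁ t₂ x₁ x₂ w v) +
               (∮ v in C((α : ℂ) - 1 - w, rv'), KInfInt α n₁ n₂ t₁ t₂ x₁ x₂ w v))))) := by
  obtain ⟨ε, hS⟩ := exists_small α hα0 hα1
  have hp := hS.pos
  refine ⟨ε, hp, ?_⟩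
  intro rv rz rw rw' rv' hz0 hzv hw0 hwv hvε hv' hvw' hwε'
  refine tendsto_const_nhds.congr' ?_
  filter_upwards [eventually_ge_atTop (x₁ + n₁ + 1).toNat] with M hM
  have hM' : x₁ + n₁ + 1 ≤ (M : ℤ) := Int.toNat_le.1 hM
  have hv0 : 0 < rv := hz0.trans hzv
  rw [circleIntegral.integral_const_mul,
    ← KInf_indep hS n₁ n₂ t₁ t₂ x₁ x₂ rv rz rw' rv' hz0 hzv hvε hv' hvw' hwε',
    ← circleIntegral.integral_const_mul, ← mul_neg, ← circle_reflect _ ((α : ℂ) - 1)]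
  unfold K2hat
  congr 1
  refine circleIntegral.integral_congr hv0.le ?_
  intro v hv
  have hv1 : ‖v - ((α : ℂ) - 1)‖ = rv := by simpa [dist_eq_norm] using hv
  simp only [sub_sub_cancel]
  congr 2
  · refine circleIntegral.integral_congr hz0.le ?_
    intro z hz
    have hz' : ‖z‖ = rz := by simpa using hz
    exact (w_int hS n₁ n₂ t₁ t₂ x₁ x₂ M hM' v z rv rw hv1 hw0 hwv hvε
      (hS.one_add (by linarith))).symm
  · refine circleIntegral.integral_congr hz0.le ?_
    intro z hz
    have hz' : ‖z - v‖ = rz := by simpa [dist_eq_norm] using hz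
    refine (w_int hS n₁ n₂ t₁ t₂ x₁ x₂ M hM' v z rv rw hv1 hw0 hwv hvε ?_).symm
    have := hS.al_add (u := (z - v) + (v - ((α : ℂ) - 1)))
      (by linarith [norm_add_le (z - v) (v - ((α : ℂ) - 1))])
    intro h0; apply this; linear_combination h0
end
end

section
/- Let 0 < α < 1/2, η ∈ ℝ and ξ > 0 be reals. For t > 0 set n(t) := ⌊(1−α)t/2 + η t^{1/2}⌋ and x(t) := ⌊t/2 − ξ t^{1/2}⌋ − 2n(t), and define I(t) := (1/(2πi)) ∮ dw e^{t(w−α)} ((w−1)α/((α−1)w))^{n(t)−1} (α/w)^{x(t)} / (w−α), the contour being any positively oriented circle centered at 0 of radius r > α (equivalently, a contour enclosing exactly the points 0 and α; the value is independent of r > α). Then lim_{t→∞} I(t) = (1/√(2πσ²)) ∫_{−∞}^{ξ+ξ_c} e^{−y²/(2σ²)} dy, where σ² := α(1−2α)/(2(1−α)) and ξ_c := (1−2α)η/(1−α). -/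
open Complex Real MeasureTheory Filter

noncomputable section

/-- The contour integral `I(t)` (rank-one part of the modified shock kernel paired with
the indicator of `{y ≥ x(t)}`), over a circle of radius `r > α` centered at `0`. -/
def shockInt (α : ℝ) (η ξ : ℝ) (r : ℝ) (t : ℝ) : ℂ :=
  (2 * (π : ℂ) * I)⁻¹ * ∮ w in C((0 : ℂ), r),
    Complex.exp ((t : ℂ) * (w - (α : ℂ))) *
      ((w - 1) * (α : ℂ) / (((α : ℝ) - 1 : ℝ) * w)) ^ (⌊(1 - α) * t / 2 + η * Real.sqrt t⌋ - 1) *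
      ((α : ℂ) / w) ^ (⌊t / 2 - ξ * Real.sqrt t⌋ - 2 * ⌊(1 - α) * t / 2 + η * Real.sqrt t⌋) *
      (w - (α : ℂ))⁻¹

/-- The limiting Gaussian probability `(2πσ²)^{-1/2} ∫_{-∞}^{ξ+ξ_c} e^{-y²/(2σ²)} dy`
with `σ² = α(1-2α)/(2(1-α))` and `ξ_c = (1-2α)η/(1-α)`. -/
def gaussLimit (α η ξ : ℝ) : ℝ :=
  (Real.sqrt (2 * π * (α * (1 - 2 * α) / (2 * (1 - α)))))⁻¹ *
    ∫ y in Set.Iic (ξ + (1 - 2 * α) * η / (1 - α)),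
      Real.exp (-y ^ 2 / (2 * (α * (1 - 2 * α) / (2 * (1 - α)))))

lemma gauss_contour (S b : ℝ) (hS : 0 < S) :
    ∫ u : ℝ, cexp (S * (1 + u * I) ^ 2 / 2 + b * (1 + u * I)) / (1 + u * I) =
      2 * π * (((Real.sqrt (2 * π * S))⁻¹ *
        ∫ y in Set.Iic b, Real.exp (-y ^ 2 / (2 * S)) : ℝ) : ℂ) := by
  have hz : ∀ u : ℝ, (1 + u * I : ℂ) ≠ 0 := by
    intro u h
    have := congrArg Complex.re h
    simp at this
  have h1 : ∀ u : ℝ, cexp (S * (1 + u * I) ^ 2 / 2 + b * (1 + u * I)) / (1 + u * I) =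
      ∫ y in Set.Ioi (0 : ℝ), cexp (S * (1 + u * I) ^ 2 / 2 + b * (1 + u * I)) *
        cexp (-(1 + u * I) * y) := by
    intro u
    rw [integral_const_mul, integral_exp_mul_complex_Ioi (by simp)]
    have := hz u
    simp only [ofReal_zero, mul_zero, Complex.exp_zero]
    rw [neg_div_neg_eq, mul_one_div]
  simp_rw [h1]
  have hint : Integrable (Function.uncurry fun (u y : ℝ) =>
      cexp (S * (1 + u * I) ^ 2 / 2 + b * (1 + u * I)) * cexp (-(1 + u * I) * y))
      ((volume : Measure ℝ).prod (volume.restrict (Set.Ioi (0 : ℝ)))) := by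
    have hA : Integrable (fun u : ℝ => Real.exp (-(S / 2) * u ^ 2) * Real.exp (S / 2 + b)) :=
      (integrable_exp_neg_mul_sq (by positivity)).mul_const _
    have hB : Integrable (fun y : ℝ => Real.exp (-1 * y)) (volume.restrict (Set.Ioi (0 : ℝ))) :=
      exp_neg_integrableOn_Ioi 0 one_pos
    refine (hA.mul_prod hB).mono ?_ ?_
    · apply Continuous.aestronglyMeasurable
      unfold Function.uncurry
      fun_prop
    · refine Eventually.of_forall fun p => le_of_eq ?_
      simp only [Function.uncurry, norm_mul, Complex.norm_exp, Real.norm_eq_abs, Real.abs_exp,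
        ← Real.exp_add]
      congr 1
      simp [pow_two]
      ring
  rw [integral_integral_swap hint]
  have h2 : ∀ y : ℝ, ∫ u : ℝ, cexp (S * (1 + u * I) ^ 2 / 2 + b * (1 + u * I)) *
        cexp (-(1 + u * I) * y) =
      ((Real.sqrt (2 * π / S) * Real.exp (-(b - y) ^ 2 / (2 * S)) : ℝ) : ℂ) := by
    intro y
    have hSc : (S : ℂ) ≠ 0 := by exact_mod_cast hS.ne'
    have : ∀ u : ℝ, cexp (S * (1 + u * I) ^ 2 / 2 + b * (1 + u * I)) *
        cexp (-(1 + u * I) * y) =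
        cexp (-(S / 2 : ℂ) * u ^ 2 + (I * (S + (b - y))) * u + (S / 2 + (b - y))) := by
      intro u
      rw [← Complex.exp_add]
      congr 1
      linear_combination (S * u ^ 2 / 2 : ℂ) * I_sq
    simp_rw [this]
    rw [integral_cexp_quadratic (by simpa using hS)]
    push_cast
    congr 1
    · rw [neg_neg, Real.sqrt_eq_rpow, Complex.ofReal_cpow (by positivity)]
      push_cast
      congr 1
      field_simp
    · congr 1
      rw [mul_pow, I_sq]
      field_simp
      ring
  simp_rw [h2]
  rw [integral_complex_ofReal]
  have h3 : ∫ y in Set.Ioi (0 : ℝ), Real.sqrt (2 * π / S) * Real.exp (-(b - y) ^ 2 / (2 * S)) =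
      Real.sqrt (2 * π / S) * ∫ y in Set.Iic b, Real.exp (-y ^ 2 / (2 * S)) := by
    rw [integral_const_mul]
    congr 1
    rw [integral_Iic_eq_integral_Iio, ← integral_indicator measurableSet_Ioi,
      ← integral_indicator measurableSet_Iio,
      ← integral_sub_left_eq_self (Set.indicator (Set.Iio b) _) volume b]
    congr 1
    ext y
    by_cases hy : 0 < y <;> simp [Set.indicator, hy]
  have h4 : Real.sqrt (2 * π / S) = 2 * π * (Real.sqrt (2 * π * S))⁻¹ := by
    rw [Real.sqrt_eq_iff_eq_sq (by positivity) (by positivity), mul_pow, inv_pow,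
      Real.sq_sqrt (by positivity)]
    field_simp
  rw [h3, h4]
  push_cast
  ring

lemma scale_limit (f : ℂ → ℂ) (a : ℂ) (C : ℝ)
    (hf : ∀ᶠ x in nhds (0 : ℂ), ‖f x - a * x ^ 2‖ ≤ C * ‖x‖ ^ 3)
    (s : ℝ → ℝ) (y : ℝ → ℂ) (z : ℂ) (hy : Tendsto y atTop (nhds 0))
    (hsy : Tendsto (fun t => (s t : ℂ) * y t) atTop (nhds z)) :
    Tendsto (fun t => (s t : ℂ) ^ 2 * f (y t)) atTop (nhds (a * z ^ 2)) := by
  have h1 : Tendsto (fun t => (s t : ℂ) ^ 2 * (f (y t) - a * y t ^ 2)) atTop (nhds 0) := by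
    have hb : Tendsto (fun t => C * (‖(s t : ℂ) * y t‖ ^ 2 * ‖y t‖)) atTop (nhds 0) := by
      have := ((hsy.norm.pow 2).mul hy.norm).const_mul C
      simpa using this
    refine squeeze_zero_norm' ?_ hb
    filter_upwards [hy.eventually hf] with t ht
    rw [norm_mul, norm_pow, norm_mul]
    calc _ ≤ ‖(s t : ℂ)‖ ^ 2 * (C * ‖y t‖ ^ 3) := by gcongr
      _ = _ := by ring
  have h2 := h1.add ((hsy.pow 2).const_mul a)
  rw [zero_add] at h2
  refine h2.congr fun t => ?_
  ring

lemma exp_second : ∀ᶠ x in nhds (0 : ℂ),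
    ‖(cexp x - 1 - x) - (1 / 2) * x ^ 2‖ ≤ 1 * ‖x‖ ^ 3 := by
  filter_upwards [Metric.ball_mem_nhds (0 : ℂ) one_pos] with x hx
  have hx' : ‖x‖ ≤ 1 := by simpa using (mem_ball_zero_iff.1 hx).le
  have := Complex.exp_bound hx' (n := 3) (by norm_num)
  norm_num [Finset.sum_range_succ, Nat.factorial] at this
  have h0 : 0 ≤ ‖x‖ ^ 3 := by positivity
  calc _ = ‖cexp x - (1 + x + x ^ 2 / 2)‖ := by congr 1; ring
    _ ≤ _ := by linarith

lemma log_second : ∀ᶠ x in nhds (0 : ℂ),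
    ‖(Complex.log (1 + x) - x) - (-1 / 2) * x ^ 2‖ ≤ 1 * ‖x‖ ^ 3 := by
  filter_upwards [Metric.ball_mem_nhds (0 : ℂ) (by norm_num : (0 : ℝ) < 1 / 2)] with x hx
  have hx' : ‖x‖ < 1 / 2 := by simpa using mem_ball_zero_iff.1 hx
  have := Complex.norm_log_sub_logTaylor_le 2 (z := x) (by linarith)
  norm_num [Complex.logTaylor, Finset.sum_range_succ] at this
  have h0 : 0 ≤ ‖x‖ ^ 3 := by positivity
  have h1 : (1 - ‖x‖)⁻¹ ≤ 2 := by
    rw [inv_le_comm₀ (by linarith) (by norm_num)]; linarith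
  calc _ = ‖Complex.log (1 + x) - (x + -x ^ 2 / 2)‖ := by congr 1; ring
    _ ≤ _ := by nlinarith

/-- Exponent of the `(1-w)/(1-α)` factor. -/
def expN (α η t : ℝ) : ℤ := ⌊(1 - α) * t / 2 + η * Real.sqrt t⌋ - 1

/-- Exponent of the `α/w` factor. -/
def expM (α η ξ t : ℝ) : ℤ :=
  ⌊t / 2 - ξ * Real.sqrt t⌋ - ⌊(1 - α) * t / 2 + η * Real.sqrt t⌋ - 1

/-- The regular part of the integrand. -/
def phaseP (α η ξ t : ℝ) (w : ℂ) : ℂ :=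
  cexp (t * (w - α)) * ((1 - w) / (1 - α)) ^ expN α η t * (α / w) ^ expM α η ξ t

lemma bdd_div_sqrt (f : ℝ → ℝ) (C : ℝ) (hf : ∀ t, |f t| ≤ C) :
    Tendsto (fun t => f t / Real.sqrt t) atTop (nhds 0) := by
  have h : Tendsto (fun t => C / Real.sqrt t) atTop (nhds 0) :=
    tendsto_const_nhds.div_atTop Real.tendsto_sqrt_atTop
  refine squeeze_zero_norm (fun t => ?_) h
  rw [norm_div, Real.norm_eq_abs, Real.norm_eq_abs, abs_of_nonneg (Real.sqrt_nonneg t)]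
  gcongr
  exact hf t

lemma inv_sqrt_tendsto : Tendsto (fun t : ℝ => (Real.sqrt t)⁻¹) atTop (nhds 0) :=
  Real.tendsto_sqrt_atTop.inv_tendsto_atTop

lemma expN_div (α η : ℝ) :
    Tendsto (fun t => (expN α η t : ℝ) / t) atTop (nhds ((1 - α) / 2)) := by
  have h1 : Tendsto (fun t => ((1 - α) / 2 + η * (Real.sqrt t)⁻¹) -
      ((Int.fract ((1 - α) * t / 2 + η * Real.sqrt t) + 1) / Real.sqrt t) * (Real.sqrt t)⁻¹)
      atTop (nhds (((1 - α) / 2 + η * 0) - 0 * 0)) := by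
    refine ((inv_sqrt_tendsto.const_mul η).const_add _).sub (Tendsto.mul ?_ inv_sqrt_tendsto)
    refine bdd_div_sqrt _ 2 fun t => ?_
    rw [abs_of_nonneg (by have := Int.fract_nonneg ((1 - α) * t / 2 + η * Real.sqrt t); linarith)]
    have := Int.fract_lt_one ((1 - α) * t / 2 + η * Real.sqrt t)
    linarith
  simp only [mul_zero, add_zero, sub_zero] at h1
  refine h1.congr' ?_
  filter_upwards [eventually_gt_atTop 0] with t ht
  have hs : 0 < Real.sqrt t := Real.sqrt_pos.2 ht
  have hst : t = Real.sqrt t ^ 2 := (Real.sq_sqrt ht.le).symm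
  have hfl := Int.self_sub_floor ((1 - α) * t / 2 + η * Real.sqrt t)
  unfold expN
  push_cast
  rw [← hfl]
  set s := Real.sqrt t
  rw [hst]
  field_simp
  ring

lemma lin_coeff (α η ξ : ℝ) (hα1 : α < 1) :
    Tendsto (fun t => (α * t - α / (1 - α) * expN α η t - expM α η ξ t) / Real.sqrt t) atTop
      (nhds (ξ + (1 - 2 * α) * η / (1 - α))) := by
  have h1 : Tendsto (fun t => (ξ + (1 - 2 * α) * η / (1 - α)) +
      (α / (1 - α) * (Int.fract ((1 - α) * t / 2 + η * Real.sqrt t) + 1)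
        + Int.fract (t / 2 - ξ * Real.sqrt t)
        - Int.fract ((1 - α) * t / 2 + η * Real.sqrt t) + 1) / Real.sqrt t)
      atTop (nhds ((ξ + (1 - 2 * α) * η / (1 - α)) + 0)) := by
    refine tendsto_const_nhds.add ?_
    refine bdd_div_sqrt _ (|α / (1 - α)| * 2 + 3) fun t => ?_
    have a1 := Int.fract_nonneg ((1 - α) * t / 2 + η * Real.sqrt t)
    have a2 := Int.fract_lt_one ((1 - α) * t / 2 + η * Real.sqrt t)
    have b1 := Int.fract_nonneg (t / 2 - ξ * Real.sqrt t)
    have b2 := Int.fract_lt_one (t / 2 - ξ * Real.sqrt t)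
    set f := Int.fract ((1 - α) * t / 2 + η * Real.sqrt t)
    set g := Int.fract (t / 2 - ξ * Real.sqrt t)
    have h2 : |α / (1 - α) * (f + 1)| ≤ |α / (1 - α)| * 2 := by
      rw [abs_mul, abs_of_nonneg (by linarith : 0 ≤ f + 1)]
      gcongr
      linarith
    have h3 := abs_le.1 h2
    rw [abs_le]
    constructor <;> linarith [h3.1, h3.2]
  rw [add_zero] at h1
  refine h1.congr' ?_
  filter_upwards [eventually_gt_atTop 0] with t ht
  have hs : 0 < Real.sqrt t := Real.sqrt_pos.2 ht
  have hst : t = Real.sqrt t ^ 2 := (Real.sq_sqrt ht.le).symm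
  have hfl := Int.self_sub_floor ((1 - α) * t / 2 + η * Real.sqrt t)
  have hfl2 := Int.self_sub_floor (t / 2 - ξ * Real.sqrt t)
  unfold expN expM
  push_cast
  rw [← hfl, ← hfl2]
  have : 1 - α ≠ 0 := by linarith
  set s := Real.sqrt t
  set f : ℝ := (⌊(1 - α) * t / 2 + η * s⌋ : ℝ)
  set g : ℝ := (⌊t / 2 - ξ * s⌋ : ℝ)
  clear_value f g
  rw [hst]
  field_simp
  ring

lemma phase_limit (α η ξ : ℝ) (hα0 : 0 < α) (hα1 : α < 1) (z : ℂ) :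
    Tendsto (fun t : ℝ => phaseP α η ξ t (α * cexp (z / Real.sqrt t))) atTop
      (nhds (cexp ((α * (1 - 2 * α) / (2 * (1 - α)) : ℝ) * z ^ 2 / 2 +
        (ξ + (1 - 2 * α) * η / (1 - α) : ℝ) * z))) := by
  set p : ℝ := α / (1 - α) with hp
  have hα1c : (1 - α : ℂ) ≠ 0 := by
    have : (1 - α : ℝ) ≠ 0 := by linarith
    exact_mod_cast this
  have hαc : (α : ℂ) ≠ 0 := by exact_mod_cast hα0.ne'
  have hinv : Tendsto (fun t : ℝ => ((Real.sqrt t : ℂ))⁻¹) atTop (nhds 0) := by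
    have := (continuous_ofReal.tendsto 0).comp inv_sqrt_tendsto
    simpa [Function.comp_def] using this
  have hζ : Tendsto (fun t : ℝ => z / (Real.sqrt t : ℂ)) atTop (nhds 0) := by
    simpa [div_eq_mul_inv] using hinv.const_mul z
  have hsne : ∀ᶠ t : ℝ in atTop, (Real.sqrt t : ℂ) ≠ 0 := by
    filter_upwards [eventually_gt_atTop 0] with t ht
    exact_mod_cast (Real.sqrt_pos.2 ht).ne'
  have hsζ : Tendsto (fun t : ℝ => (Real.sqrt t : ℂ) * (z / (Real.sqrt t : ℂ))) atTop (nhds z) := by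
    refine tendsto_const_nhds.congr' ?_
    filter_upwards [hsne] with t ht
    field_simp
  have hE := scale_limit (fun x => cexp x - 1 - x) (1 / 2) 1 exp_second Real.sqrt _ z hζ hsζ
  have hv0 : Tendsto (fun t : ℝ => cexp (z / (Real.sqrt t : ℂ)) - 1) atTop (nhds 0) := by
    have := ((Complex.continuous_exp.tendsto 0).comp hζ).sub_const 1
    simpa [Function.comp_def] using this
  have hsv : Tendsto (fun t : ℝ => (Real.sqrt t : ℂ) * (cexp (z / (Real.sqrt t : ℂ)) - 1)) atTop
      (nhds z) := by
    have := (hE.mul hinv).add hsζ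
    rw [mul_zero, zero_add] at this
    refine this.congr' ?_
    filter_upwards [hsne] with t ht
    field_simp
    ring
  have hx0 : Tendsto (fun t : ℝ => -(p : ℂ) * (cexp (z / (Real.sqrt t : ℂ)) - 1)) atTop
      (nhds 0) := by simpa using hv0.const_mul (-(p : ℂ))
  have hsx : Tendsto (fun t : ℝ => (Real.sqrt t : ℂ) *
      (-(p : ℂ) * (cexp (z / (Real.sqrt t : ℂ)) - 1))) atTop (nhds (-p * z)) := by
    refine (hsv.const_mul (-(p : ℂ))).congr fun t => ?_
    ring
  have hL := scale_limit (fun x => Complex.log (1 + x) - x) (-1 / 2) 1 log_second Real.sqrt _ _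
    hx0 hsx
  have hN : Tendsto (fun t : ℝ => ((expN α η t : ℂ) / t)) atTop (nhds ((1 - α) / 2 : ℝ)) := by
    have := (continuous_ofReal.tendsto _).comp (expN_div α η)
    simpa [Function.comp_def] using this
  have hlin : Tendsto (fun t : ℝ => ((α * t - p * expN α η t - expM α η ξ t) / Real.sqrt t : ℂ))
      atTop (nhds (ξ + (1 - 2 * α) * η / (1 - α) : ℝ)) := by
    have := (continuous_ofReal.tendsto _).comp (lin_coeff α η ξ hα1)
    refine this.congr fun t => ?_
    simp [hp]
  have hq : Tendsto (fun t : ℝ => (α : ℂ) - p * ((expN α η t : ℂ) / t)) atTop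
      (nhds ((α / 2 : ℝ) : ℂ)) := by
    have := (hN.const_mul (p : ℂ)).const_sub (α : ℂ)
    refine this.congr' (Eventually.of_forall fun t => rfl) |>.trans (le_of_eq ?_)
    congr 1
    rw [hp]
    push_cast
    field_simp
    ring
  have htot := ((hlin.mul_const z).add (hq.mul hE)).add (hN.mul hL)
  have hexp := (Complex.continuous_exp.tendsto _).comp htot
  have hlim : ((ξ + (1 - 2 * α) * η / (1 - α) : ℝ) : ℂ) * z + ((α / 2 : ℝ) : ℂ) * (1 / 2 * z ^ 2) +
      (((1 - α) / 2 : ℝ) : ℂ) * (-1 / 2 * (-p * z) ^ 2) =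
      (α * (1 - 2 * α) / (2 * (1 - α)) : ℝ) * z ^ 2 / 2 +
        (ξ + (1 - 2 * α) * η / (1 - α) : ℝ) * z := by
    rw [hp]
    push_cast
    field_simp
    ring
  rw [hlim] at hexp
  refine hexp.congr' ?_
  have hne : ∀ᶠ t : ℝ in atTop, 1 + -(p : ℂ) * (cexp (z / (Real.sqrt t : ℂ)) - 1) ≠ 0 := by
    have := hx0.const_add 1
    rw [add_zero] at this
    exact this.eventually_ne one_ne_zero
  filter_upwards [hsne, hne, eventually_gt_atTop 0] with t hs hne ht
  have htc : (t : ℂ) ≠ 0 := by exact_mod_cast ht.ne'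
  have hst : (Real.sqrt t : ℂ) ^ 2 = t := by
    rw [← ofReal_pow, Real.sq_sqrt ht.le]
  unfold phaseP
  have e1 : ((1 - α * cexp (z / Real.sqrt t)) / (1 - α) : ℂ) =
      cexp (Complex.log (1 + -(p : ℂ) * (cexp (z / (Real.sqrt t : ℂ)) - 1))) := by
    rw [Complex.exp_log hne, hp]
    push_cast
    field_simp
    ring
  have e2 : (α / (α * cexp (z / Real.sqrt t)) : ℂ) = cexp (-(z / Real.sqrt t)) := by
    rw [Complex.exp_neg]
    field_simp
  rw [e1, e2, ← Complex.exp_int_mul, ← Complex.exp_int_mul, ← Complex.exp_add, ← Complex.exp_add]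
  simp only [Function.comp_def]
  congr 1
  rw [hst]
  generalize Complex.log (1 + -(p : ℂ) * (cexp (z / (Real.sqrt t : ℂ)) - 1)) = lg
  generalize cexp (z / (Real.sqrt t : ℂ)) = ex
  field_simp
  ring

lemma phase_bound (α η ξ t ρ θ : ℝ) (_hρ0 : 0 < ρ) (hρ1 : ρ < 1)
    (hN : 0 ≤ expN α η t) :
    ‖phaseP α η ξ t (ρ * cexp (θ * I))‖ ≤ ‖phaseP α η ξ t ρ‖ *
      Real.exp (-(ρ * (1 - Real.cos θ) * (t - expN α η t / (1 - ρ) ^ 2))) := by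
  obtain ⟨N, hNN⟩ := Int.eq_ofNat_of_zero_le hN
  unfold phaseP
  rw [hNN]
  simp only [Int.ofNat_eq_natCast, zpow_natCast, norm_mul, norm_zpow, norm_pow, norm_div,
    Complex.norm_exp_ofReal_mul_I, mul_one, Int.cast_natCast]
  have h1 : ‖cexp (t * (ρ * cexp (θ * I) - α))‖ =
      ‖cexp (t * (ρ - α))‖ * Real.exp (-(t * (ρ * (1 - Real.cos θ)))) := by
    rw [Complex.norm_exp, Complex.norm_exp, ← Real.exp_add]
    congr 1
    simp [Complex.exp_ofReal_mul_I_re]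
    ring
  have h2 : ‖1 - ρ * cexp (θ * I)‖ ≤ ‖(1 - ρ : ℂ)‖ *
      Real.exp (ρ * (1 - Real.cos θ) / (1 - ρ) ^ 2) := by
    have hpos : 0 < 1 - ρ := by linarith
    have e : ‖(1 - ρ : ℂ)‖ = 1 - ρ := by
      rw [← ofReal_one, ← ofReal_sub, Complex.norm_real, Real.norm_eq_abs, abs_of_pos hpos]
    rw [e]
    refine le_of_sq_le_sq ?_ (by positivity)
    rw [Complex.sq_norm, Complex.normSq_apply, mul_pow, ← Real.exp_nat_mul]
    simp only [sub_re, one_re, re_ofReal_mul, Complex.exp_ofReal_mul_I_re, sub_im, one_im,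
      im_ofReal_mul, Complex.exp_ofReal_mul_I_im]
    have := Real.add_one_le_exp ((2 : ℕ) * (ρ * (1 - Real.cos θ) / (1 - ρ) ^ 2))
    calc _ = (1 - ρ) ^ 2 * ((2 : ℕ) * (ρ * (1 - Real.cos θ) / (1 - ρ) ^ 2) + 1) := by
          have := Real.sin_sq_add_cos_sq θ
          push_cast
          field_simp
          linear_combination ρ ^ 2 * this
      _ ≤ _ := by gcongr
  rw [h1]
  calc _ ≤ ‖cexp (t * (ρ - α))‖ * Real.exp (-(t * (ρ * (1 - Real.cos θ)))) *
        (‖(1 - ρ : ℂ)‖ * Real.exp (ρ * (1 - Real.cos θ) / (1 - ρ) ^ 2) / ‖(1 - α : ℂ)‖) ^ N *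
        (‖(α : ℂ)‖ / ‖(ρ : ℂ)‖) ^ expM α η ξ t := by gcongr
    _ = _ := by
      have : Real.exp (-(ρ * (1 - Real.cos θ) * (t - N / (1 - ρ) ^ 2))) =
        Real.exp (-(t * (ρ * (1 - Real.cos θ)))) *
          Real.exp (ρ * (1 - Real.cos θ) / (1 - ρ) ^ 2) ^ N := by
        rw [← Real.exp_nat_mul, ← Real.exp_add]
        congr 1
        ring
      rw [this, mul_div_right_comm, mul_pow]
      ring

/-- The rescaled integrand. -/
def scaledF (α η ξ t u : ℝ) : ℂ :=
  phaseP α η ξ t (α * cexp ((1 + u * I) / Real.sqrt t)) *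
    (Real.sqrt t * (1 - cexp (-((1 + u * I) / Real.sqrt t))))⁻¹

lemma integrand_eq (α η ξ t : ℝ) (hα0 : 0 < α) (hα1 : α < 1) (w : ℂ) (hw : w ≠ 0) :
    Complex.exp ((t : ℂ) * (w - (α : ℂ))) *
      ((w - 1) * (α : ℂ) / (((α : ℝ) - 1 : ℝ) * w)) ^ (⌊(1 - α) * t / 2 + η * Real.sqrt t⌋ - 1) *
      ((α : ℂ) / w) ^ (⌊t / 2 - ξ * Real.sqrt t⌋ - 2 * ⌊(1 - α) * t / 2 + η * Real.sqrt t⌋) *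
      (w - (α : ℂ))⁻¹ = phaseP α η ξ t w * (w - α)⁻¹ := by
  have hαc : (α : ℂ) ≠ 0 := by exact_mod_cast hα0.ne'
  have hα1c : (1 - α : ℂ) ≠ 0 := by
    have : (1 - α : ℝ) ≠ 0 := by linarith
    exact_mod_cast this
  have hα2c : (α - 1 : ℂ) ≠ 0 := by
    have : (α - 1 : ℝ) ≠ 0 := by linarith
    exact_mod_cast this
  have e1 : ((w - 1) * (α : ℂ) / (((α : ℝ) - 1 : ℝ) * w)) = ((1 - w) / (1 - α)) * (α / w) := by
    push_cast
    rw [div_mul_div_comm, div_eq_div_iff (by positivity) (by positivity)]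
    ring
  have e2 : expM α η ξ t = (⌊(1 - α) * t / 2 + η * Real.sqrt t⌋ - 1) +
      (⌊t / 2 - ξ * Real.sqrt t⌋ - 2 * ⌊(1 - α) * t / 2 + η * Real.sqrt t⌋) := by
    unfold expM
    ring
  unfold phaseP
  rw [e1, mul_zpow, e2, zpow_add₀ (div_ne_zero hαc hw)]
  unfold expN
  ring

lemma shockInt_eq (α η ξ r t : ℝ) (hα0 : 0 < α) (hα1 : α < 1) (ht : 0 < t)
    (hN : 0 ≤ expN α η t) (hr : α * Real.exp (1 / Real.sqrt t) ≤ r) :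
    shockInt α η ξ r t = (2 * π : ℂ)⁻¹ *
      ∫ u in Set.Ioc (-π * Real.sqrt t) (π * Real.sqrt t), scaledF α η ξ t u := by
  have hs : 0 < Real.sqrt t := Real.sqrt_pos.2 ht
  have hsc : (Real.sqrt t : ℂ) ≠ 0 := by exact_mod_cast hs.ne'
  have hαc : (α : ℂ) ≠ 0 := by exact_mod_cast hα0.ne'
  set ρ := α * Real.exp (1 / Real.sqrt t) with hρ
  have hρα : α < ρ := by
    have : 1 < Real.exp (1 / Real.sqrt t) := Real.one_lt_exp_iff.2 (by positivity)
    rw [hρ]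
    nlinarith
  have hρ0 : 0 < ρ := hα0.trans hρα
  have hr0 : 0 < r := hρ0.trans_le hr
  set f : ℂ → ℂ := fun w => phaseP α η ξ t w * (w - α)⁻¹ with hf
  have hdiff : ∀ w : ℂ, ρ ≤ ‖w‖ → DifferentiableAt ℂ f w := by
    intro w hw
    have hw0 : w ≠ 0 := by
      intro h; rw [h, norm_zero] at hw; linarith
    have hwα : w - α ≠ 0 := by
      intro h
      rw [sub_eq_zero.1 h, Complex.norm_real, Real.norm_eq_abs, abs_of_pos hα0] at hw
      linarith
    rw [hf]
    unfold phaseP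
    refine DifferentiableAt.mul (DifferentiableAt.mul (DifferentiableAt.mul ?_ ?_) ?_) ?_
    · fun_prop
    · refine DifferentiableAt.zpow ?_ (Or.inr hN)
      fun_prop
    · refine DifferentiableAt.zpow ?_ (Or.inl (div_ne_zero hαc hw0))
      exact (differentiableAt_const _).div differentiableAt_id hw0
    · exact (differentiableAt_id.sub_const _).inv hwα
  have h1 : shockInt α η ξ r t = (2 * (π : ℂ) * I)⁻¹ * ∮ w in C((0 : ℂ), r), f w := by
    unfold shockInt
    congr 1
    refine circleIntegral.integral_congr hr0.le fun w hw => ?_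
    refine integrand_eq α η ξ t hα0 hα1 w ?_
    intro h
    rw [h] at hw
    simp at hw
    linarith
  have h2 : (∮ w in C((0 : ℂ), r), f w) = ∮ w in C((0 : ℂ), ρ), f w := by
    refine Complex.circleIntegral_eq_of_differentiable_on_annulus_off_countable hρ0 hr
      Set.countable_empty ?_ ?_
    · intro w hw
      refine (hdiff w ?_).continuousAt.continuousWithinAt
      simpa using hw.2
    · intro w hw
      refine hdiff w ?_
      have := hw.1.2
      simp at this
      exact this.le
  rw [h1, h2, circleIntegral]
  have hper : Function.Periodic (fun θ => deriv (circleMap 0 ρ) θ • f (circleMap 0 ρ θ))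
      (2 * π) := by
    intro θ
    simp only [deriv_circleMap, periodic_circleMap 0 ρ θ]
  have h3 := hper.intervalIntegral_add_eq 0 (-π)
  rw [zero_add, show -π + 2 * π = π by ring] at h3
  rw [h3]
  have h4 := intervalIntegral.integral_comp_div (a := -π * Real.sqrt t) (b := π * Real.sqrt t)
    (fun θ => deriv (circleMap 0 ρ) θ • f (circleMap 0 ρ θ)) hs.ne'
  rw [mul_div_cancel_right₀ _ hs.ne', mul_div_cancel_right₀ _ hs.ne'] at h4
  have h5 : ∀ u : ℝ, deriv (circleMap 0 ρ) (u / Real.sqrt t) • f (circleMap 0 ρ (u / Real.sqrt t)) =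
      (Real.sqrt t * I : ℂ) * scaledF α η ξ t u := by
    intro u
    have hc : circleMap 0 ρ (u / Real.sqrt t) = α * cexp ((1 + u * I) / Real.sqrt t) := by
      rw [circleMap, zero_add, hρ]
      push_cast
      rw [mul_assoc, ← Complex.exp_add]
      congr 2
      field_simp
    rw [deriv_circleMap, hc, hf]
    unfold scaledF
    rw [Complex.exp_neg]
    have hE : cexp ((1 + u * I) / Real.sqrt t) ≠ 0 := Complex.exp_ne_zero _
    have hE1 : cexp ((1 + u * I) / Real.sqrt t) - 1 ≠ 0 := by
      intro h
      have h' := congrArg norm (sub_eq_zero.1 h)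
      rw [Complex.norm_exp, norm_one, Real.exp_eq_one_iff] at h'
      rw [Complex.div_ofReal_re] at h'
      simp at h'
      exact hs.ne' h'
    have hE2 : 1 - (cexp ((1 + u * I) / Real.sqrt t))⁻¹ ≠ 0 := by
      intro h
      apply hE1
      field_simp at h
      simpa using h
    generalize cexp ((1 + u * I) / Real.sqrt t) = E at *
    have hE3 : α * E - α ≠ 0 := by
      rw [show (α * E - α : ℂ) = α * (E - 1) by ring]
      exact mul_ne_zero hαc hE1
    simp only [smul_eq_mul]
    field_simp
  simp_rw [h5] at h4
  rw [intervalIntegral.integral_const_mul, intervalIntegral.integral_of_le (by nlinarith [pi_pos]),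
    Complex.real_smul, mul_assoc] at h4
  have h6 := mul_left_cancel₀ hsc h4
  rw [← h6]
  have := I_ne_zero
  field_simp

lemma scaledF_limit (α η ξ u : ℝ) (hα0 : 0 < α) (hα1 : α < 1) :
    Tendsto (fun t => scaledF α η ξ t u) atTop
      (nhds (cexp ((α * (1 - 2 * α) / (2 * (1 - α)) : ℝ) * (1 + u * I) ^ 2 / 2 +
        (ξ + (1 - 2 * α) * η / (1 - α) : ℝ) * (1 + u * I)) / (1 + u * I))) := by
  have hz : (1 + u * I : ℂ) ≠ 0 := by
    intro h
    have := congrArg Complex.re h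
    simp at this
  rw [div_eq_mul_inv]
  refine (phase_limit α η ξ hα0 hα1 (1 + u * I)).mul (Tendsto.inv₀ ?_ hz)
  set z : ℂ := 1 + u * I
  have hinv : Tendsto (fun t : ℝ => ((Real.sqrt t : ℂ))⁻¹) atTop (nhds 0) := by
    have := (continuous_ofReal.tendsto 0).comp inv_sqrt_tendsto
    simpa [Function.comp_def] using this
  have hζ : Tendsto (fun t : ℝ => -(z / (Real.sqrt t : ℂ))) atTop (nhds 0) := by
    simpa [div_eq_mul_inv] using (hinv.const_mul z).neg
  have hsne : ∀ᶠ t : ℝ in atTop, (Real.sqrt t : ℂ) ≠ 0 := by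
    filter_upwards [eventually_gt_atTop 0] with t ht
    exact_mod_cast (Real.sqrt_pos.2 ht).ne'
  have hsζ : Tendsto (fun t : ℝ => (Real.sqrt t : ℂ) * -(z / (Real.sqrt t : ℂ))) atTop
      (nhds (-z)) := by
    refine tendsto_const_nhds.congr' ?_
    filter_upwards [hsne] with t ht
    field_simp
  have hE := scale_limit (fun x => cexp x - 1 - x) (1 / 2) 1 exp_second Real.sqrt _ _ hζ hsζ
  have := ((hE.mul hinv).add hsζ).neg
  rw [mul_zero, zero_add, neg_neg] at this
  refine this.congr' ?_
  filter_upwards [hsne] with t ht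
  field_simp
  ring

lemma denom_bound (s u : ℝ) (hs : 1 ≤ s) :
    ‖((s : ℂ) * (1 - cexp (-((1 + u * I) / s))))⁻¹‖ ≤ 2 := by
  have hs0 : 0 < s := by linarith
  rw [norm_inv]
  refine inv_le_of_inv_le₀ (by norm_num) ?_
  rw [norm_mul, Complex.norm_real, Real.norm_eq_abs, abs_of_pos hs0]
  have h1 : 1 - Real.exp (-(1 / s)) ≤ ‖1 - cexp (-((1 + u * I) / s))‖ := by
    have := norm_sub_norm_le (1 : ℂ) (cexp (-((1 + u * I) / s)))
    rw [norm_one, Complex.norm_exp, neg_re, Complex.div_ofReal_re] at this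
    simpa using this
  have h2 : Real.exp (-(1 / s)) ≤ (1 + 1 / s)⁻¹ := by
    rw [Real.exp_neg]
    gcongr
    linarith [Real.add_one_le_exp (1 / s)]
  have h3 : (2 : ℝ)⁻¹ ≤ s * (1 - (1 + 1 / s)⁻¹) := by
    have : s * (1 - (1 + 1 / s)⁻¹) = s / (s + 1) := by
      field_simp
      ring
    rw [this, le_div_iff₀ (by linarith)]
    linarith
  refine h3.trans ?_
  gcongr
  linarith

theorem shock_aux
    (α : ℝ) (hα0 : 0 < α) (hα1 : α < 1 / 2) (η ξ : ℝ) (r : ℝ) (hr : α < r) :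
    Tendsto (fun t : ℝ => shockInt α η ξ r t) atTop
      (nhds ((gaussLimit α η ξ : ℝ) : ℂ)) := by
  have hα1' : α < 1 := by linarith
  set S : ℝ := α * (1 - 2 * α) / (2 * (1 - α)) with hS
  set b : ℝ := ξ + (1 - 2 * α) * η / (1 - α) with hb
  have hSpos : 0 < S := by
    have h1 : 0 < 1 - 2 * α := by linarith
    have h2 : 0 < 1 - α := by linarith
    positivity
  have hρlim : Tendsto (fun t : ℝ => α * Real.exp (1 / Real.sqrt t)) atTop (nhds α) := by
    have := ((Real.continuous_exp.tendsto 0).comp inv_sqrt_tendsto).const_mul α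
    simpa [Function.comp_def] using this
  have hρr : ∀ᶠ t : ℝ in atTop, α * Real.exp (1 / Real.sqrt t) < r :=
    hρlim.eventually_lt_const hr
  have hρ1 : ∀ᶠ t : ℝ in atTop, α * Real.exp (1 / Real.sqrt t) < 1 :=
    hρlim.eventually_lt_const hα1'
  have hNpos : ∀ᶠ t : ℝ in atTop, 0 ≤ expN α η t := by
    have := (expN_div α η).eventually_const_lt (show (0 : ℝ) < (1 - α) / 2 by linarith)
    filter_upwards [this, eventually_gt_atTop 0] with t h ht
    have h' := (div_pos_iff_of_pos_right ht).1 h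
    exact_mod_cast h'.le
  set κ : ℝ := (1 - 2 * α) / (4 * (1 - α)) with hκ
  have hκpos : 0 < κ := by
    have h1 : 0 < 1 - 2 * α := by linarith
    have h2 : 0 < 1 - α := by linarith
    positivity
  have hκev : ∀ᶠ t : ℝ in atTop,
      κ * t ≤ t - expN α η t / (1 - α * Real.exp (1 / Real.sqrt t)) ^ 2 := by
    have h1 : Tendsto (fun t : ℝ => 1 - (expN α η t / t) /
        (1 - α * Real.exp (1 / Real.sqrt t)) ^ 2) atTop
        (nhds (1 - ((1 - α) / 2) / (1 - α) ^ 2)) := by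
      refine ((expN_div α η).div ((hρlim.const_sub 1).pow 2) ?_).const_sub 1
      have : 1 - α ≠ 0 := by linarith
      positivity
    have h2 : κ < 1 - ((1 - α) / 2) / (1 - α) ^ 2 := by
      have h3 : 0 < 1 - α := by linarith
      have : 1 - ((1 - α) / 2) / (1 - α) ^ 2 = 2 * κ := by
        rw [hκ]
        field_simp
        ring
      rw [this]
      linarith
    filter_upwards [h1.eventually_const_lt h2, eventually_gt_atTop 0] with t h ht
    have := mul_le_mul_of_nonneg_right h.le ht.le
    refine this.trans (le_of_eq ?_)
    field_simp
  obtain ⟨C, hC0, hC⟩ : ∃ C : ℝ, 0 ≤ C ∧ ∀ᶠ t : ℝ in atTop,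
      ‖phaseP α η ξ t ((α * Real.exp (1 / Real.sqrt t) : ℝ) : ℂ)‖ ≤ C := by
    have h := (phase_limit α η ξ hα0 hα1' 1).norm
    obtain ⟨l, hl⟩ : ∃ l : ℝ, Tendsto (fun t : ℝ =>
        ‖phaseP α η ξ t (α * cexp (1 / Real.sqrt t))‖) atTop (nhds l) := ⟨_, h⟩
    have h' := hl.eventually_le_const (lt_of_le_of_lt (le_abs_self l) (lt_add_one _))
    refine ⟨|l| + 1, by positivity, h'.mono fun t ht => ?_⟩
    push_cast
    exact ht
  have hdom : Tendsto (fun t : ℝ => ∫ u : ℝ,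
      (Set.Ioc (-π * Real.sqrt t) (π * Real.sqrt t)).indicator (scaledF α η ξ t) u) atTop
      (nhds (∫ u : ℝ, cexp (S * (1 + u * I) ^ 2 / 2 + b * (1 + u * I)) / (1 + u * I))) := by
    refine tendsto_integral_filter_of_dominated_convergence
      (fun u => C * 2 * Real.exp (-(α * κ * (2 / π ^ 2)) * u ^ 2)) ?_ ?_ ?_ ?_
    · refine Eventually.of_forall fun t => ?_
      refine (AEStronglyMeasurable.indicator ?_ measurableSet_Ioc)
      apply Measurable.aestronglyMeasurable
      unfold scaledF phaseP
      fun_prop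
    · filter_upwards [hρ1, hNpos, hκev, hC, eventually_ge_atTop 1] with t hρ1 hN hκt hCt ht
      refine Eventually.of_forall fun u => ?_
      have ht0 : 0 < t := by linarith
      have hs : 0 < Real.sqrt t := Real.sqrt_pos.2 ht0
      have hs1 : 1 ≤ Real.sqrt t := Real.one_le_sqrt.2 ht
      by_cases hu : u ∈ Set.Ioc (-π * Real.sqrt t) (π * Real.sqrt t)
      swap
      · rw [Set.indicator_of_notMem hu, norm_zero]
        positivity
      rw [Set.indicator_of_mem hu]
      set ρ := α * Real.exp (1 / Real.sqrt t) with hρ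
      have hρα : α ≤ ρ := by
        have : 1 ≤ Real.exp (1 / Real.sqrt t) := Real.one_le_exp (by positivity)
        rw [hρ]
        nlinarith
      have hw : (α * cexp ((1 + u * I) / Real.sqrt t) : ℂ) =
          ρ * cexp ((u / Real.sqrt t : ℝ) * I) := by
        rw [hρ]
        push_cast
        rw [mul_assoc, ← Complex.exp_add]
        congr 2
        have hsc : (Real.sqrt t : ℂ) ≠ 0 := by exact_mod_cast hs.ne'
        field_simp
      unfold scaledF
      rw [norm_mul, hw]
      have hcos : Real.cos (u / Real.sqrt t) ≤ 1 - 2 / π ^ 2 * (u / Real.sqrt t) ^ 2 := by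
        apply Real.cos_le_one_sub_mul_cos_sq
        rw [abs_div, abs_of_pos hs, div_le_iff₀ hs, abs_le]
        exact ⟨by linarith [hu.1], hu.2⟩
      have hb1 := phase_bound α η ξ t ρ (u / Real.sqrt t) (hα0.trans_le hρα) hρ1 hN
      have hexp : Real.exp (-(ρ * (1 - Real.cos (u / Real.sqrt t)) *
          (t - expN α η t / (1 - ρ) ^ 2))) ≤ Real.exp (-(α * κ * (2 / π ^ 2)) * u ^ 2) := by
        apply Real.exp_le_exp.2
        have h1 : α * (2 / π ^ 2 * (u / Real.sqrt t) ^ 2) * (κ * t) ≤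
            ρ * (1 - Real.cos (u / Real.sqrt t)) * (t - expN α η t / (1 - ρ) ^ 2) := by
          have h0 : 0 ≤ 1 - Real.cos (u / Real.sqrt t) := by linarith [Real.cos_le_one (u / Real.sqrt t)]
          have hρ0 : 0 ≤ ρ := hα0.le.trans hρα
          gcongr
          linarith
        have h2 : α * (2 / π ^ 2 * (u / Real.sqrt t) ^ 2) * (κ * t) =
            α * κ * (2 / π ^ 2) * u ^ 2 := by
          rw [div_pow, Real.sq_sqrt ht0.le]
          field_simp
        linarith
      have hd := denom_bound (Real.sqrt t) u hs1
      calc _ ≤ (C * Real.exp (-(α * κ * (2 / π ^ 2)) * u ^ 2)) * 2 := by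
            refine mul_le_mul (hb1.trans ?_) hd (norm_nonneg _) (by positivity)
            gcongr
        _ = _ := by ring
    · exact (integrable_exp_neg_mul_sq (by positivity)).const_mul _
    · refine Eventually.of_forall fun u => ?_
      refine (scaledF_limit α η ξ u hα0 hα1').congr' ?_
      have h1 : ∀ᶠ t : ℝ in atTop, |u| / π < Real.sqrt t :=
        Real.tendsto_sqrt_atTop.eventually_gt_atTop _
      filter_upwards [h1] with t ht
      rw [div_lt_iff₀ pi_pos] at ht
      have := abs_lt.1 ht
      rw [Set.indicator_of_mem]
      constructor <;> linarith [this.1, this.2]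
  rw [gauss_contour S b hSpos] at hdom
  have hfin := hdom.const_mul ((2 * π : ℂ)⁻¹)
  have hpi : (π : ℂ) ≠ 0 := by exact_mod_cast pi_ne_zero
  rw [inv_mul_cancel_left₀ (by simpa using hpi)] at hfin
  refine hfin.congr' ?_
  filter_upwards [hρr, hNpos, eventually_gt_atTop 0] with t h1 h2 h3
  rw [shockInt_eq α η ξ r t hα0 hα1' h3 h2 h1.le, integral_indicator measurableSet_Ioc]

/-- Gaussian fluctuations at the shock: for `0 < α < 1/2` and `ξ > 0`,
`lim_{t→∞} I(t)` is the Gaussian distribution function evaluated at `ξ + ξ_c`. -/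
theorem shock_gaussian_limit
    (α : ℝ) (hα0 : 0 < α) (hα1 : α < 1 / 2) (η ξ : ℝ) (hξ : 0 < ξ)
    (r : ℝ) (hr : α < r) :
    Tendsto (fun t : ℝ => shockInt α η ξ r t) atTop
      (nhds ((gaussLimit α η ξ : ℝ) : ℂ)) := by
  exact shock_aux α hα0 hα1 η ξ r hr
end
end
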